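/- Let x₀ ∈ ℝ, σ ∈ (0,√2), and let φ : (−∞,0]×ℝ → ℝ be a classical solution of φ_t = φ_xx + f′(w(x + x₀)) φ satisfying |φ(t,x)| ≤ C e^{σ|x|} for all (t,x) ∈ (−∞,0]×ℝ and some C > 0, together with the orthogonality condition ∫_ℝ φ(t,x) w′(x + x₀) dx = 0 for every t ≤ 0. Then φ ≡ 0 on (−∞,0]×ℝ. -/

import Mathlib

open Real MeasureTheory

noncomputable section

/-- The heteroclinic profile `w(s) = tanh(s/√2)`. -/
def w (s : ℝ) : ℝ := Real.tanh (s / Real.sqrt 2)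

/-- `w'`. -/
def w1 (s : ℝ) : ℝ := deriv w s

/-- The Allen–Cahn nonlinearity `f(v) = v(1-v²)`. -/
def f (v : ℝ) : ℝ := v * (1 - v ^ 2)

/-- `f'`. -/
def f1 (v : ℝ) : ℝ := deriv f v

open Set Filter Topology

/-- `u` is differentiable in time at `(t, x)` with derivative `a`, and twice differentiable
in space with second derivative `e`. -/
def HeatJet (u : ℝ → ℝ → ℝ) (t x a e : ℝ) : Prop :=
  ∃ d : ℝ → ℝ, (∀ᶠ y in 𝓝 x, HasDerivAt (u t) (d y) y) ∧ HasDerivAt d e x ∧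
    HasDerivAt (fun s => u s x) a t

lemma HeatJet.sub {u v : ℝ → ℝ → ℝ} {t x a e b c : ℝ} (hu : HeatJet u t x a e)
    (hv : HeatJet v t x b c) : HeatJet (fun s y => u s y - v s y) t x (a - b) (e - c) := by
  obtain ⟨d, h1, h2, h3⟩ := hu
  obtain ⟨d', h1', h2', h3'⟩ := hv
  refine ⟨fun y => d y - d' y, ?_, h2.sub h2', h3.sub h3'⟩
  filter_upwards [h1, h1'] with y hy hy' using hy.sub hy'

lemma HeatJet.neg {u : ℝ → ℝ → ℝ} {t x a e : ℝ} (hu : HeatJet u t x a e) :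
    HeatJet (fun s y => - u s y) t x (-a) (-e) := by
  obtain ⟨d, h1, h2, h3⟩ := hu
  refine ⟨fun y => - d y, ?_, h2.neg, h3.neg⟩
  filter_upwards [h1] with y hy using hy.neg

lemma HeatJet.const_mul {u : ℝ → ℝ → ℝ} {t x a e : ℝ} (c : ℝ) (hu : HeatJet u t x a e) :
    HeatJet (fun s y => c * u s y) t x (c * a) (c * e) := by
  obtain ⟨d, h1, h2, h3⟩ := hu
  refine ⟨fun y => c * d y, ?_, h2.const_mul c, h3.const_mul c⟩
  filter_upwards [h1] with y hy using hy.const_mul c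

lemma HeatJet.time_mul {u : ℝ → ℝ → ℝ} {t x a e : ℝ} (s : ℝ) (hu : HeatJet u t x a e) :
    HeatJet (fun r y => (r - s) * u r y) t x (u t x + (t - s) * a) ((t - s) * e) := by
  obtain ⟨d, h1, h2, h3⟩ := hu
  refine ⟨fun y => (t - s) * d y, ?_, h2.const_mul _, ?_⟩
  · filter_upwards [h1] with y hy using hy.const_mul _
  · simpa using ((hasDerivAt_id t).sub_const s).fun_mul h3

lemma HeatJet.comp_shift {u : ℝ → ℝ → ℝ} {t x a e : ℝ} (r b : ℝ)
    (hu : HeatJet u (t - r) (x - b) a e) : HeatJet (fun s y => u (s - r) (y - b)) t x a e := by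
  obtain ⟨d, h1, h2, h3⟩ := hu
  refine ⟨fun y => d (y - b), ?_, h2.comp_sub_const x b, h3.comp_sub_const t r⟩
  have hc : Tendsto (fun y : ℝ => y - b) (𝓝 x) (𝓝 (x - b)) :=
    (continuous_id.sub continuous_const).tendsto x
  filter_upwards [hc.eventually h1] with y hy using hy.comp_sub_const y b

lemma HeatJet.comp_neg {u : ℝ → ℝ → ℝ} {t x a e : ℝ}
    (hu : HeatJet u t (-x) a e) : HeatJet (fun s y => u s (-y)) t x a e := by
  obtain ⟨d, h1, h2, h3⟩ := hu
  refine ⟨fun y => - d (-y), ?_, ?_, h3⟩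
  · have hc : Tendsto (fun y : ℝ => - y) (𝓝 x) (𝓝 (-x)) := continuous_neg.tendsto x
    filter_upwards [hc.eventually h1] with y hy
    simpa [Function.comp_def] using hy.scomp y (hasDerivAt_neg y)
  · simpa using (h2.scomp x (hasDerivAt_neg x)).fun_neg

/-- A function of space alone. -/
lemma HeatJet.of_space {g d : ℝ → ℝ} {e : ℝ} (t x : ℝ) (h1 : ∀ y, HasDerivAt g (d y) y)
    (h2 : HasDerivAt d e x) : HeatJet (fun _ y => g y) t x 0 e :=
  ⟨d, Eventually.of_forall h1, h2, hasDerivAt_const t (g x)⟩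

/-- A function of time alone. -/
lemma HeatJet.of_time {g : ℝ → ℝ} {a : ℝ} (t x : ℝ) (h : HasDerivAt g a t) :
    HeatJet (fun s _ => g s) t x a 0 :=
  ⟨fun _ => 0, Eventually.of_forall fun y => hasDerivAt_const y (g t), hasDerivAt_const x 0, h⟩

/-- Second-derivative test: necessary condition at a local maximum. -/
lemma IsLocalMax.second_deriv_nonpos {f d : ℝ → ℝ} {x e : ℝ} (hmax : IsLocalMax f x)
    (h1 : ∀ᶠ y in 𝓝 x, HasDerivAt f (d y) y) (h2 : HasDerivAt d e x) : d x = 0 ∧ e ≤ 0 := by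
  have hd0 : d x = 0 := hmax.hasDerivAt_eq_zero h1.self_of_nhds
  refine ⟨hd0, ?_⟩
  by_contra! he
  have hdd : deriv f =ᶠ[𝓝 x] d := h1.mono fun y hy => hy.deriv
  have hmin : IsLocalMin f x := by
    apply isLocalMin_of_deriv_deriv_pos
    · rw [hdd.deriv_eq, h2.deriv]; exact he
    · rw [hdd.self_of_nhds, hd0]
    · exact h1.self_of_nhds.continuousAt
  have hconst : f =ᶠ[𝓝 x] fun _ => f x := by
    filter_upwards [hmax, hmin] with y h h' using le_antisymm h h'
  have : deriv f =ᶠ[𝓝 x] fun _ => 0 := by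
    filter_upwards [hconst.eventuallyEq_nhds] with y hy
    rw [hy.deriv_eq]; simp
  have h0 : d =ᶠ[𝓝 x] fun _ => 0 := hdd.symm.trans this
  have := h0.deriv_eq
  rw [h2.deriv] at this
  simp at this
  linarith

/-- The derivative is nonnegative at a maximum from the left. -/
lemma HasDerivAt.nonneg_of_left_max {g : ℝ → ℝ} {a t : ℝ} (h : HasDerivAt g a t)
    (hm : ∀ᶠ s in 𝓝[<] t, g s ≤ g t) : 0 ≤ a := by
  have h' := (hasDerivWithinAt_iff_tendsto_slope' (s := Iio t) (lt_irrefl t)).1 h.hasDerivWithinAt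
  refine ge_of_tendsto h' ?_
  filter_upwards [hm, self_mem_nhdsWithin] with s hs hst
  rw [slope_def_field]
  exact div_nonneg_of_nonpos (by linarith) (by linarith [mem_Iio.1 hst])

/-- Parabolic maximum principle on a compact set. -/
theorem nonpos_of_strict_subcaloric {K : Set (ℝ × ℝ)} (hK : IsCompact K) {z : ℝ → ℝ → ℝ}
    (hz : ContinuousOn (Function.uncurry z) K)
    (h : ∀ t x, (t, x) ∈ K → 0 < z t x → (∀ᶠ s in 𝓝[<] t, (s, x) ∈ K) ∧
      (∀ᶠ y in 𝓝 x, (t, y) ∈ K) ∧ ∃ a e, HeatJet z t x a e ∧ a < e) :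
    ∀ t x, (t, x) ∈ K → z t x ≤ 0 := by
  intro t₀ x₀ hp
  obtain ⟨⟨t, x⟩, hq, hmax⟩ := hK.exists_isMaxOn ⟨_, hp⟩ hz
  refine (hmax hp).trans ?_
  by_contra! hpos
  obtain ⟨hs, hy, a, e, ⟨d, h1, h2, h3⟩, hae⟩ := h t x hq hpos
  have he := (IsLocalMax.second_deriv_nonpos (hy.mono fun y hy => hmax hy) h1 h2).2
  have ha := h3.nonneg_of_left_max (hs.mono fun s hs => hmax hs)
  linarith

/-- Parabolic maximum principle on a box. -/
theorem nonpos_of_strict_subcaloric_box {s τ a b : ℝ} {z : ℝ → ℝ → ℝ}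
    (hz : ContinuousOn (Function.uncurry z) (Icc s τ ×ˢ Icc a b))
    (hbot : ∀ x ∈ Icc a b, z s x ≤ 0) (hleft : ∀ t ∈ Icc s τ, z t a ≤ 0)
    (hright : ∀ t ∈ Icc s τ, z t b ≤ 0)
    (h : ∀ t ∈ Ioc s τ, ∀ x ∈ Ioo a b, ∃ p q, HeatJet z t x p q ∧ p < q) :
    ∀ t ∈ Icc s τ, ∀ x ∈ Icc a b, z t x ≤ 0 := by
  intro t ht x hx
  refine nonpos_of_strict_subcaloric (isCompact_Icc.prod isCompact_Icc) hz ?_ t x ⟨ht, hx⟩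
  rintro t x ⟨ht, hx⟩ hpos
  simp only at ht hx
  have hts : s < t := lt_of_le_of_ne ht.1 (by rintro rfl; linarith [hbot x hx])
  have hxa : a < x := lt_of_le_of_ne hx.1 (by rintro rfl; linarith [hleft t ht])
  have hxb : x < b := lt_of_le_of_ne hx.2 (by rintro rfl; linarith [hright t ht])
  refine ⟨?_, ?_, h t ⟨hts, ht.2⟩ x ⟨hxa, hxb⟩⟩
  · filter_upwards [Ioo_mem_nhdsLT hts] with r hr
    exact ⟨⟨hr.1.le, hr.2.le.trans ht.2⟩, hx⟩
  · filter_upwards [Icc_mem_nhds hxa hxb] with y hy using ⟨ht, hy⟩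

/-- A supersolution of the heat equation on `t ≥ 0` which blows up at the origin only. -/
def cornerBarrier (t x : ℝ) : ℝ := - Real.log (x ^ 2 + 8 * t) + 32 * t / (x ^ 2 + 8 * t)

lemma cornerBarrier_jet {t x : ℝ} (hρ : 0 < x ^ 2 + 8 * t) :
    ∃ a e, HeatJet cornerBarrier t x a e ∧ e ≤ a := by
  have hρ' := hρ.ne'
  refine ⟨-(8 / (x ^ 2 + 8 * t)) + (32 * (x ^ 2 + 8 * t) - 32 * t * 8) / (x ^ 2 + 8 * t) ^ 2,
    -((2 * (x ^ 2 + 8 * t) - 2 * x * (2 * x)) / (x ^ 2 + 8 * t) ^ 2)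
      + (-(64 * t) * (x ^ 2 + 8 * t) ^ 2 -
        (-(64 * t * x)) * (2 * (x ^ 2 + 8 * t) * (2 * x))) / ((x ^ 2 + 8 * t) ^ 2) ^ 2,
    ⟨fun y => -((2 * y) / (y ^ 2 + 8 * t)) + (-(64 * t * y)) / (y ^ 2 + 8 * t) ^ 2,
      ?_, ?_, ?_⟩, ?_⟩
  · have hc : Tendsto (fun y : ℝ => y ^ 2 + 8 * t) (𝓝 x) (𝓝 (x ^ 2 + 8 * t)) :=
      (by fun_prop : Continuous fun y : ℝ => y ^ 2 + 8 * t).tendsto x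
    filter_upwards [hc.eventually (lt_mem_nhds hρ)] with y hy
    have hy' := hy.ne'
    have hd : HasDerivAt (fun y : ℝ => y ^ 2 + 8 * t) (2 * y) y := by
      simpa using (hasDerivAt_pow 2 y).add_const (8 * t)
    have := (hd.log hy').fun_neg.fun_add ((hasDerivAt_const y (32 * t)).fun_div hd hy')
    refine this.congr_deriv ?_
    congr 2
    ring
  · have hd : HasDerivAt (fun y : ℝ => y ^ 2 + 8 * t) (2 * x) x := by
      simpa using (hasDerivAt_pow 2 x).add_const (8 * t)
    have h1 : HasDerivAt (fun y : ℝ => 2 * y) 2 x := by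
      simpa using (hasDerivAt_id x).const_mul 2
    have h2 : HasDerivAt (fun y : ℝ => -(64 * t * y)) (-(64 * t)) x := by
      simpa using ((hasDerivAt_id x).const_mul (64 * t)).fun_neg
    have := (h1.fun_div hd hρ').fun_neg.fun_add (h2.fun_div (hd.fun_pow 2) (by positivity))
    refine this.congr_deriv ?_
    norm_num
  · have hd : HasDerivAt (fun s : ℝ => x ^ 2 + 8 * s) 8 t := by
      simpa using ((hasDerivAt_id t).const_mul 8).const_add (x ^ 2)
    have h1 : HasDerivAt (fun s : ℝ => 32 * s) 32 t := by
      simpa using (hasDerivAt_id t).const_mul 32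
    exact (hd.log hρ').fun_neg.fun_add (h1.fun_div hd hρ')
  · rw [← sub_nonneg]
    have : -(8 / (x ^ 2 + 8 * t)) + (32 * (x ^ 2 + 8 * t) - 32 * t * 8) / (x ^ 2 + 8 * t) ^ 2 -
      (-((2 * (x ^ 2 + 8 * t) - 2 * x * (2 * x)) / (x ^ 2 + 8 * t) ^ 2)
      + (-(64 * t) * (x ^ 2 + 8 * t) ^ 2 -
        (-(64 * t * x)) * (2 * (x ^ 2 + 8 * t) * (2 * x))) / ((x ^ 2 + 8 * t) ^ 2) ^ 2)
      = (2 * (x ^ 2 + 8 * t) ^ 2 - 12 * x ^ 2 * (x ^ 2 + 8 * t) + 32 * x ^ 4) /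
        (x ^ 2 + 8 * t) ^ 3 := by
      field_simp
      ring
    rw [this]
    refine div_nonneg ?_ (by positivity)
    nlinarith [sq_nonneg (x ^ 2 + 8 * t - 3 * x ^ 2), sq_nonneg (x ^ 2)]

/-- Maximum principle on a box for a bounded function that may be discontinuous at the two
bottom corners. -/
theorem le_of_subcaloric_off_corners {u : ℝ → ℝ → ℝ} {α τ x₁ x₂ M K B : ℝ} (hK : 0 ≤ K)
    (hcont : ContinuousOn (Function.uncurry u)
      ((Icc α τ ×ˢ Icc x₁ x₂) \ {(α, x₁), (α, x₂)}))
    (hB : ∀ t ∈ Icc α τ, ∀ x ∈ Icc x₁ x₂, u t x ≤ B)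
    (hjet : ∀ t ∈ Ioc α τ, ∀ x ∈ Ioo x₁ x₂, ∃ a e, HeatJet u t x a e ∧ a ≤ e + K)
    (hbot : ∀ x ∈ Icc x₁ x₂, u α x ≤ M) (hleft : ∀ t ∈ Icc α τ, u t x₁ ≤ M)
    (hright : ∀ t ∈ Icc α τ, u t x₂ ≤ M) :
    ∀ t ∈ Icc α τ, ∀ x ∈ Icc x₁ x₂, u t x ≤ M + K * (t - α) := by
  intro t₀ ht₀ x₀ hx₀
  rcases ht₀.1.eq_or_lt with rfl | ht₀α
  · simpa using hbot x₀ hx₀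
  have hατ : α ≤ τ := ht₀.1.trans ht₀.2
  have hx12 : x₁ ≤ x₂ := hx₀.1.trans hx₀.2
  set ρ : ℝ → ℝ → ℝ → ℝ := fun ξ t x => (x - ξ) ^ 2 + 8 * (t - α) with hρdef
  have hρc : ∀ ξ, Continuous fun p : ℝ × ℝ => ρ ξ p.1 p.2 := fun ξ => by
    simp only [hρdef]; fun_prop
  set D : ℝ := (x₂ - x₁) ^ 2 + 8 * (τ - α) + 1 with hD
  have hD1 : 1 ≤ D := by
    rw [hD]; nlinarith [sq_nonneg (x₂ - x₁)]
  have hρD : ∀ ξ ∈ Icc x₁ x₂, ∀ t ∈ Icc α τ, ∀ x ∈ Icc x₁ x₂, ρ ξ t x ≤ D := by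
    intro ξ hξ t ht x hx
    have : (x - ξ) ^ 2 ≤ (x₂ - x₁) ^ 2 := by
      apply sq_le_sq'
      · linarith [hξ.2, hx.1]
      · linarith [hξ.1, hx.2]
    simp only [hρdef, hD]
    linarith [ht.2]
  set W : ℝ → ℝ → ℝ → ℝ := fun ξ t x => cornerBarrier (t - α) (x - ξ) with hW
  have hWlow : ∀ ξ, ∀ t ∈ Icc α τ, ∀ x, - Real.log (ρ ξ t x) ≤ W ξ t x := by
    intro ξ t ht x
    simp only [hW, cornerBarrier, hρdef]
    have : 0 ≤ 32 * (t - α) / ((x - ξ) ^ 2 + 8 * (t - α)) := by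
      have := ht.1
      apply div_nonneg <;> nlinarith [sq_nonneg (x - ξ)]
    linarith
  have hWpos : ∀ ξ ∈ Icc x₁ x₂, ∀ t ∈ Icc α τ, ∀ x ∈ Icc x₁ x₂, 0 < ρ ξ t x →
      0 ≤ W ξ t x + Real.log D := by
    intro ξ hξ t ht x hx hpos
    have := Real.log_le_log hpos (hρD ξ hξ t ht x hx)
    linarith [hWlow ξ t ht x]
  have key : ∀ ε > 0, u t₀ x₀ - M - (K + ε) * (t₀ - α)
      - ε * (W x₁ t₀ x₀ + W x₂ t₀ x₀ + 2 * Real.log D) ≤ 0 := by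
    intro ε hε
    obtain ⟨κ, hκ0, hκlog, hκ₁⟩ : ∃ κ > 0, (B - M) / ε - Real.log D < - Real.log κ ∧
        κ < 8 * (t₀ - α) := by
      have h1 : Tendsto (fun κ => - Real.log κ) (𝓝[>] 0) atTop :=
        tendsto_neg_atBot_atTop.comp Real.tendsto_log_nhdsGT_zero
      have h2 : ∀ᶠ κ in 𝓝[>] (0 : ℝ), κ < 8 * (t₀ - α) :=
        nhdsWithin_le_nhds (gt_mem_nhds (by linarith))
      obtain ⟨κ, hκ⟩ := ((h1.eventually_gt_atTop ((B - M) / ε - Real.log D)).and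
        (h2.and self_mem_nhdsWithin)).exists
      exact ⟨κ, hκ.2.2, hκ.1, hκ.2.1⟩
    set S : Set (ℝ × ℝ) := (Icc α τ ×ˢ Icc x₁ x₂) ∩
      ({p | κ ≤ ρ x₁ p.1 p.2} ∩ {p | κ ≤ ρ x₂ p.1 p.2}) with hS
    have hScomp : IsCompact S := (isCompact_Icc.prod isCompact_Icc).inter_right
      ((isClosed_le continuous_const (hρc x₁)).inter (isClosed_le continuous_const (hρc x₂)))
    have hWcont : ∀ ξ, ContinuousOn (fun p : ℝ × ℝ => W ξ p.1 p.2) {p | 0 < ρ ξ p.1 p.2} := by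
      intro ξ p hp
      have hp : (p.2 - ξ) ^ 2 + 8 * (p.1 - α) ≠ 0 := ne_of_gt hp
      apply ContinuousAt.continuousWithinAt
      simp only [hW, cornerBarrier]
      fun_prop (disch := exact hp)
    refine nonpos_of_strict_subcaloric hScomp (z := fun t x => u t x - M - (K + ε) * (t - α)
      - ε * (W x₁ t x + W x₂ t x + 2 * Real.log D)) ?_ ?_ t₀ x₀ ?_
    · have hc1 : ContinuousOn (Function.uncurry u) S := by
        refine hcont.mono ?_
        rintro ⟨t, x⟩ ⟨hp, h1, h2⟩
        refine ⟨hp, ?_⟩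
        rintro (h | h)
        · simp only [Prod.mk.injEq] at h
          obtain ⟨rfl, rfl⟩ := h
          simp [hρdef] at h1
          linarith
        · simp only [mem_singleton_iff, Prod.mk.injEq] at h
          obtain ⟨rfl, rfl⟩ := h
          simp [hρdef] at h2
          linarith
      have hc2 := (hWcont x₁).mono fun p (hp : p ∈ S) => hκ0.trans_le hp.2.1
      have hc3 := (hWcont x₂).mono fun p (hp : p ∈ S) => hκ0.trans_le hp.2.2
      have hc4 : ContinuousOn (fun p : ℝ × ℝ => M + (K + ε) * (p.1 - α)) S := by fun_prop
      have := (hc1.sub hc4).sub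
        (((hc2.add hc3).add (continuousOn_const (c := 2 * Real.log D))).const_smul ε)
      refine this.congr ?_
      rintro ⟨t, x⟩ -
      simp [Function.uncurry]
      ring
    · rintro t x ⟨⟨ht, hx⟩, h1, h2⟩ hpos
      simp only [mem_ofPred_eq] at ht hx h1 h2
      have hx₁ : x₁ ∈ Icc x₁ x₂ := ⟨le_rfl, hx12⟩
      have hx₂ : x₂ ∈ Icc x₁ x₂ := ⟨hx12, le_rfl⟩
      have hp1 := hWpos x₁ hx₁ t ht x hx (hκ0.trans_le h1)
      have hp2 := hWpos x₂ hx₂ t ht x hx (hκ0.trans_le h2)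
      have hKt : 0 ≤ (K + ε) * (t - α) := mul_nonneg (by linarith) (by linarith [ht.1])
      have hsum : ∀ A, A ≤ W x₁ t x + W x₂ t x + 2 * Real.log D → ε * A ≤
          ε * (W x₁ t x + W x₂ t x + 2 * Real.log D) := fun A hA =>
        mul_le_mul_of_nonneg_left hA hε.le
      have huM : M < u t x := by
        have := hsum 0 (by linarith)
        linarith
      have hblow : ∀ ξ, ξ = x₁ ∨ ξ = x₂ → κ ≠ ρ ξ t x := by
        intro ξ hξ hκρ
        have hl := hWlow ξ t ht x
        rw [← hκρ] at hl
        have := hsum ((B - M) / ε) (by rcases hξ with rfl | rfl <;> linarith)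
        rw [mul_div_cancel₀ _ hε.ne'] at this
        linarith [hB t ht x hx]
      have h1' := lt_of_le_of_ne h1 (hblow x₁ (Or.inl rfl))
      have h2' := lt_of_le_of_ne h2 (hblow x₂ (Or.inr rfl))
      have hts : α < t := lt_of_le_of_ne ht.1 (by rintro rfl; linarith [hbot x hx])
      have hxa : x₁ < x := lt_of_le_of_ne hx.1 (by rintro rfl; linarith [hleft t ht])
      have hxb : x < x₂ := lt_of_le_of_ne hx.2 (by rintro rfl; linarith [hright t ht])
      have hopen : ∀ᶠ p : ℝ × ℝ in 𝓝 (t, x), κ < ρ x₁ p.1 p.2 ∧ κ < ρ x₂ p.1 p.2 :=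
        ((isOpen_lt continuous_const (hρc x₁)).inter
          (isOpen_lt continuous_const (hρc x₂))).mem_nhds ⟨h1', h2'⟩
      refine ⟨?_, ?_, ?_⟩
      · have hc : Tendsto (fun s : ℝ => (s, x)) (𝓝[<] t) (𝓝 (t, x)) :=
          ((by fun_prop : Continuous fun s : ℝ => (s, x)).tendsto t).mono_left nhdsWithin_le_nhds
        filter_upwards [Ioo_mem_nhdsLT hts, hc.eventually hopen] with r hr hr'
        exact ⟨⟨⟨hr.1.le, hr.2.le.trans ht.2⟩, hx⟩, hr'.1.le, hr'.2.le⟩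
      · have hc : Tendsto (fun y : ℝ => (t, y)) (𝓝 x) (𝓝 (t, x)) :=
          (by fun_prop : Continuous fun y : ℝ => (t, y)).tendsto x
        filter_upwards [Icc_mem_nhds hxa hxb, hc.eventually hopen] with y hy hy'
        exact ⟨⟨ht, hy⟩, hy'.1.le, hy'.2.le⟩
      · obtain ⟨a, e, hj, hae⟩ := hjet t ⟨hts, ht.2⟩ x ⟨hxa, hxb⟩
        obtain ⟨a₁, e₁, hj₁, hae₁⟩ := cornerBarrier_jet (hκ0.trans h1')
        obtain ⟨a₂, e₂, hj₂, hae₂⟩ := cornerBarrier_jet (hκ0.trans h2')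
        have hlin : HasDerivAt (fun s => M + (K + ε) * (s - α) + ε * (2 * Real.log D))
            (K + ε) t := by
          simpa using ((((hasDerivAt_id t).sub_const α).const_mul (K + ε)).const_add M).add_const
            (ε * (2 * Real.log D))
        have hJ := ((hj.sub (HeatJet.of_time t x hlin)).sub
          ((hj₁.comp_shift α x₁).const_mul ε)).sub ((hj₂.comp_shift α x₂).const_mul ε)
        refine ⟨a - (K + ε) - ε * a₁ - ε * a₂, e - 0 - ε * e₁ - ε * e₂, ?_, ?_⟩
        · convert hJ using 3
          simp only [hW]
          ring
        · nlinarith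
    · refine ⟨⟨ht₀, hx₀⟩, ?_, ?_⟩ <;> simp only [hρdef, mem_ofPred_eq] <;>
        nlinarith [sq_nonneg (x₀ - x₁), sq_nonneg (x₀ - x₂)]
  have hlim : Tendsto (fun ε : ℝ => u t₀ x₀ - M - (K + ε) * (t₀ - α)
      - ε * (W x₁ t₀ x₀ + W x₂ t₀ x₀ + 2 * Real.log D)) (𝓝[>] 0)
      (𝓝 (u t₀ x₀ - M - (K + 0) * (t₀ - α)
      - 0 * (W x₁ t₀ x₀ + W x₂ t₀ x₀ + 2 * Real.log D))) := by
    apply Tendsto.mono_left _ nhdsWithin_le_nhds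
    apply Continuous.tendsto
    fun_prop
  have := le_of_tendsto hlim (by filter_upwards [self_mem_nhdsWithin] with ε hε using key ε hε)
  linarith

lemma reflection_bound_upper {u : ℝ → ℝ → ℝ} {s τ c r K B M : ℝ} (hs : s ≤ τ) (hr : 0 < r)
    (hcont : ContinuousOn (Function.uncurry u) (Icc s τ ×ˢ Icc (c - r) (c + r)))
    (hjet : ∀ t ∈ Ioc s τ, ∀ x ∈ Ioo (c - r) (c + r), ∃ a e, HeatJet u t x a e ∧ |a - e| ≤ K)
    (hB : ∀ t ∈ Icc s τ, ∀ x ∈ Icc (c - r) (c + r), |u t x| ≤ B)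
    (hM : K * (τ - s) + B < M) (hM' : 2 * B * (τ - s) ≤ M * r ^ 2) :
    ∀ h ∈ Icc 0 r, (τ - s) * (u τ (c + h) - u τ (c - h)) ≤ M * h * (2 * r - h) := by
  intro h hh
  have main : ∀ t ∈ Icc s τ, ∀ h ∈ Icc 0 r,
      (t - s) * (u t (h - (-c)) - u t (- (h - c))) - M * h * (2 * r - h) ≤ 0 := by
    have hM0 : 0 ≤ M := by
      have hB0 : 0 ≤ B := (abs_nonneg _).trans (hB s ⟨le_rfl, hs⟩ c ⟨by linarith, by linarith⟩)
      by_contra! hneg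
      nlinarith [mul_nonneg hB0 (sub_nonneg.2 hs), pow_pos hr 2]
    apply nonpos_of_strict_subcaloric_box
    · have h1 : ContinuousOn (fun p : ℝ × ℝ => u p.1 (p.2 - (-c))) (Icc s τ ×ˢ Icc 0 r) := by
        refine hcont.comp (f := fun p : ℝ × ℝ => (p.1, p.2 - (-c))) (by fun_prop) ?_
        rintro ⟨t, x⟩ ⟨ht, hx⟩
        exact ⟨ht, by constructor <;> simp only <;> linarith [hx.1, hx.2]⟩
      have h2 : ContinuousOn (fun p : ℝ × ℝ => u p.1 (-(p.2 - c))) (Icc s τ ×ˢ Icc 0 r) := by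
        refine hcont.comp (f := fun p : ℝ × ℝ => (p.1, -(p.2 - c))) (by fun_prop) ?_
        rintro ⟨t, x⟩ ⟨ht, hx⟩
        exact ⟨ht, by constructor <;> simp only <;> linarith [hx.1, hx.2]⟩
      have h3 : Continuous fun p : ℝ × ℝ => p.1 - s := by fun_prop
      have h4 : Continuous fun p : ℝ × ℝ => M * p.2 * (2 * r - p.2) := by fun_prop
      exact (h3.continuousOn.mul (h1.sub h2)).sub h4.continuousOn
    · intro x hx
      have : 0 ≤ M * x * (2 * r - x) :=
        mul_nonneg (mul_nonneg hM0 hx.1) (by linarith [hx.2])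
      simp only [sub_self, zero_mul]
      linarith
    · intro t ht
      simp
    · intro t ht
      have h1 := abs_le.1 (hB t ht (r - (-c)) ⟨by linarith, by linarith⟩)
      have h2 := abs_le.1 (hB t ht (-(r - c)) ⟨by linarith, by linarith⟩)
      have h3 : (t - s) * (u t (r - (-c)) - u t (-(r - c))) ≤ (t - s) * (2 * B) :=
        mul_le_mul_of_nonneg_left (by linarith) (by linarith [ht.1])
      have h4 : (t - s) * (2 * B) ≤ (τ - s) * (2 * B) :=
        mul_le_mul_of_nonneg_right (by linarith [ht.2]) (by linarith)
      nlinarith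
    · intro t ht x hx
      obtain ⟨a₁, e₁, hj₁, hae₁⟩ := hjet t ht (x - (-c))
        ⟨by linarith [hx.1, hx.2], by linarith [hx.1, hx.2]⟩
      obtain ⟨a₂, e₂, hj₂, hae₂⟩ := hjet t ht (-(x - c))
        ⟨by linarith [hx.1, hx.2], by linarith [hx.1, hx.2]⟩
      have ht' : t ∈ Icc s τ := ⟨ht.1.le, ht.2⟩
      have hb₁ := abs_le.1 (hB t ht' (x - (-c)) ⟨by linarith [hx.1, hx.2], by linarith [hx.1, hx.2]⟩)
      have hb₂ := abs_le.1 (hB t ht' (-(x - c)) ⟨by linarith [hx.1, hx.2], by linarith [hx.1, hx.2]⟩)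
      have hJ₁ : HeatJet (fun s y => u s (y - (-c))) t x a₁ e₁ := by
        have := HeatJet.comp_shift (u := u) (t := t) (x := x) 0 (-c) (by simpa using hj₁)
        simpa using this
      have hJ₂ : HeatJet (fun s y => u s (-(y - c))) t x a₂ e₂ := by
        have := HeatJet.comp_shift (u := fun s y => u s (-y)) (t := t) (x := x) 0 c
          (by simpa using hj₂.comp_neg)
        simpa using this
      have hd1 : ∀ y, HasDerivAt (fun y => M * y * (2 * r - y)) (2 * M * r - 2 * M * y) y := by
        intro y
        have := ((hasDerivAt_id y).const_mul M).fun_mul ((hasDerivAt_id y).const_sub (2 * r))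
        refine this.congr_deriv ?_
        simp
        ring
      have hd2 : HasDerivAt (fun y => 2 * M * r - 2 * M * y) (-(2 * M)) x := by
        simpa using ((hasDerivAt_id x).const_mul (2 * M)).const_sub (2 * M * r)
      refine ⟨_, _, ((hJ₁.sub hJ₂).time_mul s).sub (HeatJet.of_space t x hd1 hd2), ?_⟩
      have h1 := abs_le.1 hae₁
      have h2 := abs_le.1 hae₂
      have hK0 : 0 ≤ K := (abs_nonneg _).trans hae₁
      have h3 : (t - s) * ((a₁ - e₁) - (a₂ - e₂)) ≤ (t - s) * (2 * K) :=
        mul_le_mul_of_nonneg_left (by linarith) (by linarith [ht.1])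
      have h4 : (t - s) * (2 * K) ≤ (τ - s) * (2 * K) :=
        mul_le_mul_of_nonneg_right (by linarith [ht.2]) (by linarith)
      nlinarith
  have := main τ ⟨hs, le_rfl⟩ h hh
  rw [show h - (-c) = c + h by ring, show -(h - c) = c - h by ring] at this
  linarith

/-- Interior Lipschitz bound in space, by comparing a solution with its reflection. -/
theorem reflection_bound {u : ℝ → ℝ → ℝ} {s τ c r K B M : ℝ} (hs : s ≤ τ) (hr : 0 < r)
    (hcont : ContinuousOn (Function.uncurry u) (Icc s τ ×ˢ Icc (c - r) (c + r)))
    (hjet : ∀ t ∈ Ioc s τ, ∀ x ∈ Ioo (c - r) (c + r), ∃ a e, HeatJet u t x a e ∧ |a - e| ≤ K)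
    (hB : ∀ t ∈ Icc s τ, ∀ x ∈ Icc (c - r) (c + r), |u t x| ≤ B)
    (hM : K * (τ - s) + B < M) (hM' : 2 * B * (τ - s) ≤ M * r ^ 2) :
    ∀ h ∈ Icc 0 r, (τ - s) * |u τ (c + h) - u τ (c - h)| ≤ M * h * (2 * r - h) := by
  intro h hh
  have h1 := reflection_bound_upper hs hr hcont hjet hB hM hM' h hh
  have h2 := reflection_bound_upper (u := fun t x => - u t x) hs hr hcont.neg
    (fun t ht x hx => by
      obtain ⟨a, e, hj, hae⟩ := hjet t ht x hx
      exact ⟨_, _, hj.neg, by rwa [← abs_neg, show -(-a - -e) = a - e by ring]⟩)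
    (fun t ht x hx => by simpa using hB t ht x hx) hM hM' h hh
  rcases abs_cases (u τ (c + h) - u τ (c - h)) with ⟨h, -⟩ | ⟨h, -⟩ <;> rw [h] <;> linarith

/-- Propagation of a bound across a slab free of discontinuities, except possibly on its bottom,
where the time-Lipschitz constant is at most `N`. -/
lemma slab_bound {u : ℝ → ℝ → ℝ} {P : Set (ℝ × ℝ)} {α τ x₁ x₂ η N K B c : ℝ} (hατ : α ≤ τ)
    (hN : 0 ≤ N) (hP : IsClosed P)
    (hcont : ∀ t ∈ Icc α τ, ∀ x ∈ Icc x₁ x₂, (t, x) ∉ P →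
      ContinuousAt (Function.uncurry u) (t, x))
    (hlip : ∀ x ∈ Icc x₁ x₂, (α, x) ∈ P → ∀ s ∈ Icc α τ, |u s x - u α x| ≤ N * (s - α))
    (hjet : ∀ t ∈ Icc α τ, ∀ x ∈ Icc x₁ x₂, ∃ a e, HeatJet u t x a e ∧ |a - e| ≤ K)
    (hB : ∀ t ∈ Icc α τ, ∀ x ∈ Icc x₁ x₂, |u t x| ≤ B)
    (hfree : ∀ t ∈ Ioc α τ, ∀ x ∈ Icc x₁ x₂, (t, x) ∉ P)
    (hbot : ∀ x ∈ Icc x₁ x₂, |u α x - c| ≤ η)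
    (hleft : ∀ t ∈ Icc α τ, |u t x₁ - c| ≤ η) (hright : ∀ t ∈ Icc α τ, |u t x₂ - c| ≤ η) :
    ∀ x ∈ Icc x₁ x₂, |u τ x - c| ≤ η + (N + K) * (τ - α) := by
  intro x hx
  have hx12 : x₁ ≤ x₂ := hx.1.trans hx.2
  have hK : 0 ≤ K := by
    obtain ⟨a, e, -, h⟩ := hjet α ⟨le_rfl, hατ⟩ x hx
    exact (abs_nonneg _).trans h
  set Z : Set ℝ := ({y | (α, y) ∈ P} ∪ {x₁, x₂}) ∩ Icc x₁ x₂ with hZ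
  have hZc : IsClosed ({y | (α, y) ∈ P} ∪ {x₁, x₂}) :=
    (hP.preimage (by fun_prop : Continuous fun y : ℝ => (α, y))).union
      (Set.toFinite {x₁, x₂}).isClosed
  have hZcomp : IsCompact Z := isCompact_Icc.inter_left hZc
  have hZb : ∀ y ∈ Z, ∀ t ∈ Icc α τ, |u t y - c| ≤ η + N * (τ - α) := by
    rintro y ⟨hy | rfl | rfl, hy'⟩ t ht
    · have h1 := hlip y hy' hy t ht
      have h2 := hbot y hy'
      have h3 : N * (t - α) ≤ N * (τ - α) := mul_le_mul_of_nonneg_left (by linarith [ht.2]) hN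
      have := abs_add_le (u t y - u α y) (u α y - c)
      rw [sub_add_sub_cancel] at this
      linarith
    · have := mul_nonneg hN (sub_nonneg.2 hατ)
      linarith [hleft t ht]
    · have := mul_nonneg hN (sub_nonneg.2 hατ)
      linarith [hright t ht]
  obtain ⟨y₁, ⟨hy₁Z, hy₁x⟩, hy₁⟩ := (hZcomp.inter_right isClosed_Iic).exists_isGreatest
    (⟨x₁, ⟨Or.inr (Or.inl rfl), le_rfl, hx12⟩, hx.1⟩ : (Z ∩ Iic x).Nonempty)
  obtain ⟨y₂, ⟨hy₂Z, hy₂x⟩, hy₂⟩ := (hZcomp.inter_right isClosed_Ici).exists_isLeast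
    (⟨x₂, ⟨Or.inr (Or.inr rfl), hx12, le_rfl⟩, hx.2⟩ : (Z ∩ Ici x).Nonempty)
  have hgap : ∀ y ∈ Ioo y₁ y₂, (α, y) ∉ P := by
    intro y hy hyP
    have hyZ : y ∈ Z := ⟨Or.inl hyP, hy₁Z.2.1.trans hy.1.le, hy.2.le.trans hy₂Z.2.2⟩
    rcases le_total y x with h | h
    · linarith [hy₁ ⟨hyZ, h⟩, hy.1]
    · linarith [hy₂ ⟨hyZ, h⟩, hy.2]
  have hsub : Icc y₁ y₂ ⊆ Icc x₁ x₂ := Icc_subset_Icc hy₁Z.2.1 hy₂Z.2.2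
  have hNτ := mul_nonneg hN (sub_nonneg.2 hατ)
  have hc : ContinuousOn (Function.uncurry u)
      ((Icc α τ ×ˢ Icc y₁ y₂) \ {(α, y₁), (α, y₂)}) := by
    rintro ⟨t, y⟩ ⟨⟨ht, hy⟩, hne⟩
    simp only at ht hy
    refine (hcont t ht y (hsub hy) ?_).continuousWithinAt
    rcases ht.1.eq_or_lt with rfl | hlt
    · apply hgap
      refine ⟨lt_of_le_of_ne hy.1 ?_, lt_of_le_of_ne hy.2 ?_⟩
      · rintro rfl; exact hne (Or.inl rfl)
      · rintro rfl; exact hne (Or.inr rfl)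
    · exact hfree t ⟨hlt, ht.2⟩ y (hsub hy)
  have hup := le_of_subcaloric_off_corners (M := c + (η + N * (τ - α))) hK hc
    (fun t ht y hy => (abs_le.1 (hB t ht y (hsub hy))).2)
    (fun t ht y hy => by
      obtain ⟨a, e, hj, h⟩ := hjet t ⟨ht.1.le, ht.2⟩ y (hsub ⟨hy.1.le, hy.2.le⟩)
      exact ⟨a, e, hj, by linarith [(abs_le.1 h).2]⟩)
    (fun y hy => by linarith [(abs_le.1 (hbot y (hsub hy))).2])
    (fun t ht => by linarith [(abs_le.1 (hZb y₁ hy₁Z t ht)).2])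
    (fun t ht => by linarith [(abs_le.1 (hZb y₂ hy₂Z t ht)).2]) τ ⟨hατ, le_rfl⟩ x ⟨hy₁x, hy₂x⟩
  have hlow := le_of_subcaloric_off_corners (u := fun t y => - u t y)
    (M := - c + (η + N * (τ - α))) (B := B) hK hc.neg
    (fun t ht y hy => by linarith [(abs_le.1 (hB t ht y (hsub hy))).1])
    (fun t ht y hy => by
      obtain ⟨a, e, hj, h⟩ := hjet t ⟨ht.1.le, ht.2⟩ y (hsub ⟨hy.1.le, hy.2.le⟩)
      exact ⟨_, _, hj.neg, by linarith [(abs_le.1 h).1]⟩)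
    (fun y hy => by linarith [(abs_le.1 (hbot y (hsub hy))).1])
    (fun t ht => by linarith [(abs_le.1 (hZb y₁ hy₁Z t ht)).1])
    (fun t ht => by linarith [(abs_le.1 (hZb y₂ hy₂Z t ht)).1]) τ ⟨hατ, le_rfl⟩ x ⟨hy₁x, hy₂x⟩
  rw [abs_le]
  constructor <;> linarith

/-- Joint continuity at a point near which the discontinuity set has uniform Lipschitz bounds
along the coordinate directions. -/
theorem continuousAt_of_lipschitz_on_bad_set {u : ℝ → ℝ → ℝ} {P : Set (ℝ × ℝ)}
    {t₀ x₀ ρ N K B : ℝ} (hρ : 0 < ρ) (hN : 0 ≤ N) (hP : IsClosed P) (hp : (t₀, x₀) ∈ P)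
    (hcont : ∀ t ∈ Ioo (t₀ - ρ) (t₀ + ρ), ∀ x ∈ Ioo (x₀ - ρ) (x₀ + ρ), (t, x) ∉ P →
      ContinuousAt (Function.uncurry u) (t, x))
    (hlipt : ∀ t ∈ Ioo (t₀ - ρ) (t₀ + ρ), ∀ x ∈ Ioo (x₀ - ρ) (x₀ + ρ), (t, x) ∈ P →
      ∀ s ∈ Ioo (t₀ - ρ) (t₀ + ρ), |u s x - u t x| ≤ N * |s - t|)
    (hlipx : ∀ t ∈ Ioo (t₀ - ρ) (t₀ + ρ), ∀ x ∈ Ioo (x₀ - ρ) (x₀ + ρ), (t, x) ∈ P →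
      ∀ y ∈ Ioo (x₀ - ρ) (x₀ + ρ), |u t y - u t x| ≤ N * |y - x|)
    (hjet : ∀ t ∈ Ioo (t₀ - ρ) (t₀ + ρ), ∀ x ∈ Ioo (x₀ - ρ) (x₀ + ρ),
      ∃ a e, HeatJet u t x a e ∧ |a - e| ≤ K)
    (hB : ∀ t ∈ Ioo (t₀ - ρ) (t₀ + ρ), ∀ x ∈ Ioo (x₀ - ρ) (x₀ + ρ), |u t x| ≤ B) :
    ContinuousAt (Function.uncurry u) (t₀, x₀) := by
  have ht₀ : t₀ ∈ Ioo (t₀ - ρ) (t₀ + ρ) := ⟨by linarith, by linarith⟩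
  have hx₀ : x₀ ∈ Ioo (x₀ - ρ) (x₀ + ρ) := ⟨by linarith, by linarith⟩
  have hK : 0 ≤ K := by
    obtain ⟨a, e, -, h⟩ := hjet t₀ ht₀ x₀ hx₀
    exact (abs_nonneg _).trans h
  have hB0 : 0 ≤ B := (abs_nonneg _).trans (hB t₀ ht₀ x₀ hx₀)
  have hct : ∀ x ∈ Ioo (x₀ - ρ) (x₀ + ρ), ContinuousAt (fun s => u s x) t₀ := by
    intro x hx
    obtain ⟨a, e, ⟨d, -, -, h⟩, -⟩ := hjet t₀ ht₀ x hx
    exact h.continuousAt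
  have hcx : ContinuousAt (u t₀) x₀ := by
    obtain ⟨a, e, ⟨d, h, -, -⟩, -⟩ := hjet t₀ ht₀ x₀ hx₀
    exact h.self_of_nhds.continuousAt
  set c := u t₀ x₀ with hc
  rw [Metric.continuousAt_iff']
  intro ε₀ hε₀
  set ε := ε₀ / 10 with hεdef
  have hε : 0 < ε := by positivity
  -- the window in space
  obtain ⟨r, hr0, hrρ, hrN, hrc⟩ : ∃ r > 0, r < ρ ∧ 2 * r * N ≤ ε ∧
      ∀ x ∈ Icc (x₀ - r) (x₀ + r), |u t₀ x - c| ≤ ε := by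
    obtain ⟨r₁, hr₁, h₁⟩ := Metric.continuousAt_iff.1 hcx ε hε
    refine ⟨min (min (r₁ / 2) (ρ / 2)) (ε / (2 * (N + 1))), by positivity, ?_, ?_, ?_⟩
    · exact ((min_le_left _ _).trans (min_le_right _ _)).trans_lt (by linarith)
    · have h : min (min (r₁ / 2) (ρ / 2)) (ε / (2 * (N + 1))) ≤ ε / (2 * (N + 1)) :=
        min_le_right _ _
      rw [le_div_iff₀ (by positivity)] at h
      have h0 : 0 < min (min (r₁ / 2) (ρ / 2)) (ε / (2 * (N + 1))) := by positivity
      nlinarith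
    · intro x hx
      have h : min (min (r₁ / 2) (ρ / 2)) (ε / (2 * (N + 1))) ≤ r₁ / 2 :=
        (min_le_left _ _).trans (min_le_left _ _)
      refine (h₁ (x := x) ?_).le
      rw [Real.dist_eq, abs_lt]
      constructor <;> linarith [hx.1, hx.2]
  have hWsub : Icc (x₀ - r) (x₀ + r) ⊆ Ioo (x₀ - ρ) (x₀ + ρ) :=
    fun x hx => ⟨by linarith [hx.1], by linarith [hx.2]⟩
  have hlW : x₀ - r ∈ Icc (x₀ - r) (x₀ + r) := ⟨by linarith, by linarith⟩
  have hrW : x₀ + r ∈ Icc (x₀ - r) (x₀ + r) := ⟨by linarith, by linarith⟩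
  have hx₀W : x₀ ∈ Icc (x₀ - r) (x₀ + r) := ⟨by linarith, by linarith⟩
  -- the window in time
  obtain ⟨δ, hδ0, hδρ, hδN, hδl, hδr, hδc⟩ : ∃ δ > 0, δ < ρ ∧ (N + K) * (2 * δ) ≤ ε ∧
      (∀ t ∈ Icc (t₀ - δ) (t₀ + δ), |u t (x₀ - r) - c| ≤ 2 * ε) ∧
      (∀ t ∈ Icc (t₀ - δ) (t₀ + δ), |u t (x₀ + r) - c| ≤ 2 * ε) ∧
      ∀ t ∈ Icc (t₀ - δ) (t₀ + δ), |u t x₀ - c| ≤ 2 * ε := by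
    have hloc : ∀ x ∈ Icc (x₀ - r) (x₀ + r), ∀ᶠ δ in 𝓝[>] (0 : ℝ),
        ∀ t ∈ Icc (t₀ - δ) (t₀ + δ), |u t x - c| ≤ 2 * ε := by
      intro x hx
      obtain ⟨d, hd, h⟩ := Metric.continuousAt_iff.1 (hct x (hWsub hx)) ε hε
      filter_upwards [Ioo_mem_nhdsGT hd] with δ hδ t ht
      have h1 := h (x := t) (by
        rw [Real.dist_eq, abs_lt]; constructor <;> linarith [ht.1, ht.2, hδ.1, hδ.2])
      rw [Real.dist_eq] at h1
      have := abs_add_le (u t x - u t₀ x) (u t₀ x - c)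
      rw [sub_add_sub_cancel] at this
      linarith [hrc x hx]
    have h1 : ∀ᶠ δ in 𝓝[>] (0 : ℝ), δ < ρ := nhdsWithin_le_nhds (gt_mem_nhds hρ)
    have h2 : ∀ᶠ δ in 𝓝[>] (0 : ℝ), (N + K) * (2 * δ) < ε := by
      have : Tendsto (fun δ : ℝ => (N + K) * (2 * δ)) (𝓝[>] 0) (𝓝 ((N + K) * (2 * 0))) :=
        ((by fun_prop : Continuous fun δ : ℝ => (N + K) * (2 * δ)).tendsto 0).mono_left
          nhdsWithin_le_nhds
      exact this.eventually (gt_mem_nhds (by simpa using hε))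
    have h0 : ∀ᶠ δ in 𝓝[>] (0 : ℝ), 0 < δ := self_mem_nhdsWithin
    obtain ⟨δ, h0, h1, h2, h3, h4, h5⟩ := (h0.and (h1.and (h2.and
      ((hloc _ hlW).and ((hloc _ hrW).and (hloc _ hx₀W)))))).exists
    exact ⟨δ, h0, h1, h2.le, h3, h4, h5⟩
  have hTsub : Icc (t₀ - δ) (t₀ + δ) ⊆ Ioo (t₀ - ρ) (t₀ + ρ) :=
    fun t ht => ⟨by linarith [ht.1], by linarith [ht.2]⟩
  -- time slices meeting the bad set
  have hslice : ∀ t ∈ Icc (t₀ - δ) (t₀ + δ), ∀ y ∈ Icc (x₀ - r) (x₀ + r), (t, y) ∈ P →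
      ∀ x ∈ Icc (x₀ - r) (x₀ + r), |u t x - c| ≤ 3 * ε := by
    intro t ht y hy hyP x hx
    have h1 := hlipx t (hTsub ht) y (hWsub hy) hyP x (hWsub hx)
    have h2 := hlipt t (hTsub ht) y (hWsub hy) hyP t₀ ht₀
    have h3 := hrc y hy
    have h4 : |x - y| ≤ 2 * r := by
      rw [abs_le]; constructor <;> linarith [hx.1, hx.2, hy.1, hy.2]
    have h5 : |t₀ - t| ≤ δ := by
      rw [abs_le]; constructor <;> linarith [ht.1, ht.2]
    have h6 : N * |x - y| ≤ N * (2 * r) := mul_le_mul_of_nonneg_left h4 hN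
    have h7 : N * |t₀ - t| ≤ N * δ := mul_le_mul_of_nonneg_left h5 hN
    have h8 := mul_nonneg hK hδ0.le
    rw [abs_sub_comm (u t₀ y)] at h2
    have h9 := abs_add_le (u t x - u t y) (u t y - u t₀ y)
    have h10 := abs_add_le (u t x - u t₀ y) (u t₀ y - c)
    rw [sub_add_sub_cancel] at h9 h10
    nlinarith
  have hafter : ∀ t' ∈ Icc (t₀ - δ) (t₀ + δ), (∃ y ∈ Icc (x₀ - r) (x₀ + r), (t', y) ∈ P) →
      ∀ t ∈ Icc t' (t₀ + δ), ∀ x ∈ Icc (x₀ - r) (x₀ + r), |u t x - c| ≤ 4 * ε := by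
    rintro t' ht' ⟨y, hy, hyP⟩ t ht x hx
    have hcomp : IsCompact (Prod.fst '' (P ∩ (Icc t' t ×ˢ Icc (x₀ - r) (x₀ + r)))) :=
      ((isCompact_Icc.prod isCompact_Icc).inter_left hP).image continuous_fst
    obtain ⟨α, ⟨⟨α', y'⟩, ⟨hαP, hα, hy'⟩, rfl⟩, hαmax⟩ := hcomp.exists_isGreatest
      ⟨t', ⟨(t', y), ⟨hyP, ⟨le_rfl, ht.1⟩, hy⟩, rfl⟩⟩
    simp only at hα hy' hαmax
    have hsub : Icc α' t ⊆ Icc (t₀ - δ) (t₀ + δ) := Icc_subset_Icc (ht'.1.trans hα.1) ht.2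
    have hαmem := hsub ⟨le_rfl, hα.2⟩
    have := slab_bound (u := u) (c := c) (η := 3 * ε) (N := N) (K := K) (B := B) hα.2 hN hP
      (fun s hs x hx => hcont s (hTsub (hsub hs)) x (hWsub hx))
      (fun x hx hxP s hs => by
        have := hlipt α' (hTsub hαmem) x (hWsub hx) hxP s (hTsub (hsub hs))
        rwa [abs_of_nonneg (sub_nonneg.2 hs.1)] at this)
      (fun s hs x hx => hjet s (hTsub (hsub hs)) x (hWsub hx))
      (fun s hs x hx => hB s (hTsub (hsub hs)) x (hWsub hx))
      (fun s hs x hx hsP => by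
        have := hαmax ⟨(s, x), ⟨hsP, ⟨hα.1.trans hs.1.le, hs.2⟩, hx⟩, rfl⟩
        linarith [hs.1])
      (hslice α' hαmem y' hy' hαP)
      (fun s hs => (hδl s (hsub hs)).trans (by linarith))
      (fun s hs => (hδr s (hsub hs)).trans (by linarith)) x hx
    have h1 : (N + K) * (t - α') ≤ (N + K) * (2 * δ) :=
      mul_le_mul_of_nonneg_left (by linarith [hαmem.1, ht.2]) (by linarith)
    linarith
  have hxnhds : ∀ᶠ p : ℝ × ℝ in 𝓝 (t₀, x₀), p.2 ∈ Icc (x₀ - r) (x₀ + r) :=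
    continuousAt_snd.eventually (Icc_mem_nhds (by simp only; linarith) (by simp only; linarith))
  have htnhds : ∀ᶠ p : ℝ × ℝ in 𝓝 (t₀, x₀), p.1 ≤ t₀ + δ :=
    continuousAt_fst.eventually (Iic_mem_nhds (by simp only; linarith))
  have hfut : ∀ t ∈ Icc t₀ (t₀ + δ), ∀ x ∈ Icc (x₀ - r) (x₀ + r), |u t x - c| ≤ 4 * ε :=
    hafter t₀ ⟨by linarith, by linarith⟩ ⟨x₀, hx₀W, hp⟩
  by_cases hcase : ∃ t' ∈ Ico (t₀ - δ) t₀, ∃ y ∈ Icc (x₀ - r) (x₀ + r), (t', y) ∈ P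
  · obtain ⟨t', ht', hy⟩ := hcase
    have hlow : ∀ᶠ p : ℝ × ℝ in 𝓝 (t₀, x₀), t' ≤ p.1 :=
      continuousAt_fst.eventually (Ici_mem_nhds ht'.2)
    filter_upwards [hxnhds, htnhds, hlow] with p h1 h2 h3
    have := hafter t' ⟨ht'.1, by linarith [ht'.2]⟩ hy p.1 ⟨h3, h2⟩ p.2 h1
    rw [Real.dist_eq]
    change |u p.1 p.2 - c| < ε₀
    linarith
  · push Not at hcase
    -- below the slice `t = t₀` the solution is uniformly Lipschitz in space
    obtain ⟨L, hL0, hL⟩ : ∃ L > 0, ∀ τ ∈ Ico (t₀ - δ / 2) t₀,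
        ∀ x ∈ Icc (x₀ - r / 2) (x₀ + r / 2), |u τ x - u τ x₀| ≤ L * |x - x₀| := by
      obtain ⟨M, hM1, hM2, hM0⟩ : ∃ M, K * δ + B < M ∧ 2 * B * δ ≤ M * (r / 2) ^ 2 ∧ 0 < M := by
        have h : 0 < (r / 2) ^ 2 := by positivity
        refine ⟨K * δ + B + 1 + 2 * B * δ / (r / 2) ^ 2, ?_, ?_, by positivity⟩
        · have : 0 ≤ 2 * B * δ / (r / 2) ^ 2 := by positivity
          linarith
        · rw [add_mul, div_mul_cancel₀ _ h.ne']
          have : 0 ≤ (K * δ + B + 1) * (r / 2) ^ 2 := by positivity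
          linarith
      refine ⟨M * r / δ, by positivity, fun τ hτ x hx => ?_⟩
      have hxx : |x - x₀| ≤ r / 2 := by
        rw [abs_le]; constructor <;> linarith [hx.1, hx.2]
      set m := (x + x₀) / 2 with hm
      have hmsub : Icc (m - r / 2) (m + r / 2) ⊆ Icc (x₀ - r) (x₀ + r) := by
        intro y hy
        constructor <;> linarith [hy.1, hy.2, hx.1, hx.2]
      have hsτ : t₀ - δ ≤ τ := by linarith [hτ.1]
      have hTs : Icc (t₀ - δ) τ ⊆ Icc (t₀ - δ) (t₀ + δ) :=
        Icc_subset_Icc le_rfl (by linarith [hτ.2])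
      have hR := reflection_bound (u := u) (s := t₀ - δ) (τ := τ) (c := m) (r := r / 2) (K := K)
        (B := B) (M := M) hsτ (by positivity)
        (by
          rintro ⟨t, y⟩ ⟨ht, hy⟩
          simp only at ht hy
          exact (hcont t (hTsub (hTs ht)) y (hWsub (hmsub hy))
            (hcase t ⟨ht.1, ht.2.trans_lt hτ.2⟩ y (hmsub hy))).continuousWithinAt)
        (fun t ht y hy => hjet t (hTsub (hTs ⟨ht.1.le, ht.2⟩)) y
          (hWsub (hmsub ⟨hy.1.le, hy.2.le⟩)))
        (fun t ht y hy => hB t (hTsub (hTs ht)) y (hWsub (hmsub hy)))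
        (by nlinarith [hτ.2]) (by nlinarith [hτ.2]) (|x - x₀| / 2) ⟨by positivity, by linarith⟩
      have habs : |u τ (m + |x - x₀| / 2) - u τ (m - |x - x₀| / 2)| = |u τ x - u τ x₀| := by
        rcases abs_cases (x - x₀) with ⟨h, -⟩ | ⟨h, -⟩ <;> rw [h]
        · rw [show m + (x - x₀) / 2 = x by rw [hm]; ring,
            show m - (x - x₀) / 2 = x₀ by rw [hm]; ring]
        · rw [show m + -(x - x₀) / 2 = x₀ by rw [hm]; ring,
            show m - -(x - x₀) / 2 = x by rw [hm]; ring, abs_sub_comm]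
      rw [habs] at hR
      have h1 : M * (|x - x₀| / 2) * (2 * (r / 2) - |x - x₀| / 2) ≤ M * (|x - x₀| / 2) * r :=
        mul_le_mul_of_nonneg_left (by linarith [abs_nonneg (x - x₀)]) (by positivity)
      have h2 : δ / 2 * |u τ x - u τ x₀| ≤ (τ - (t₀ - δ)) * |u τ x - u τ x₀| :=
        mul_le_mul_of_nonneg_right (by linarith [hτ.1]) (abs_nonneg _)
      rw [div_mul_eq_mul_div, le_div_iff₀ hδ0]
      nlinarith
    have hlow : ∀ᶠ p : ℝ × ℝ in 𝓝 (t₀, x₀), t₀ - δ / 2 ≤ p.1 :=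
      continuousAt_fst.eventually (Ici_mem_nhds (by simp only; linarith))
    have hxr : ∀ᶠ p : ℝ × ℝ in 𝓝 (t₀, x₀), p.2 ∈ Icc (x₀ - r / 2) (x₀ + r / 2) :=
      continuousAt_snd.eventually (Icc_mem_nhds (by simp only; linarith) (by simp only; linarith))
    have hxL : ∀ᶠ p : ℝ × ℝ in 𝓝 (t₀, x₀), L * |p.2 - x₀| < ε := by
      have : Tendsto (fun p : ℝ × ℝ => L * |p.2 - x₀|) (𝓝 (t₀, x₀)) (𝓝 (L * |x₀ - x₀|)) :=
        (by fun_prop : Continuous fun p : ℝ × ℝ => L * |p.2 - x₀|).tendsto (t₀, x₀)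
      exact this.eventually (gt_mem_nhds (by simpa using hε))
    filter_upwards [hxnhds, htnhds, hlow, hxr, hxL] with p h1 h2 h3 h4 h5
    rw [Real.dist_eq]
    change |u p.1 p.2 - c| < ε₀
    rcases le_or_gt t₀ p.1 with h | h
    · linarith [hfut p.1 ⟨h, h2⟩ p.2 h1]
    · have h6 := hL p.1 ⟨h3, h⟩ p.2 h4
      have h7 := hδc p.1 ⟨by linarith, h2⟩
      have := abs_add_le (u p.1 p.2 - u p.1 x₀) (u p.1 x₀ - c)
      rw [sub_add_sub_cancel] at this
      linarith

/-- A function with pointwise time and second space derivatives and locally bounded heat operator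
is jointly continuous. -/
theorem continuousAt_of_heatJet {u : ℝ → ℝ → ℝ} {F : ℝ → ℝ} (hF : Continuous F)
    (hjet : ∀ t < 0, ∀ x, ∃ a e, HeatJet u t x a e ∧ |a - e| ≤ F x)
    (hB : ∀ t < 0, ∀ x, |u t x| ≤ F x) :
    ∀ t < 0, ∀ x, ContinuousAt (Function.uncurry u) (t, x) := by
  set P : Set (ℝ × ℝ) := {p | ∀ᶠ q in 𝓝 p, ContinuousAt (Function.uncurry u) q}ᶜ with hPdef
  have hP : IsClosed P := isOpen_setOfPred_eventually_nhds.isClosed_compl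
  have hgood : ∀ p, p ∉ P → ContinuousAt (Function.uncurry u) p := fun p hp =>
    Eventually.self_of_nhds (not_not.1 hp)
  have hneg : IsOpen {p : ℝ × ℝ | p.1 < 0} := isOpen_lt continuous_fst continuous_const
  set Q : Set (ℝ × ℝ) := P ∩ {p | p.1 < 0} with hQ
  suffices hempty : Q = ∅ by
    intro t ht x
    apply hgood
    intro hp
    have : (t, x) ∈ Q := ⟨hp, ht⟩
    rw [hempty] at this
    exact this
  by_contra hne
  have hct : ∀ t < 0, ∀ x, ∃ a, HasDerivAt (fun s => u s x) a t := by
    intro t ht x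
    obtain ⟨a, e, ⟨d, -, -, h⟩, -⟩ := hjet t ht x
    exact ⟨a, h⟩
  have hcx : ∀ t < 0, ∀ x, ∃ a, HasDerivAt (u t) a x := by
    intro t ht x
    obtain ⟨a, e, ⟨d, h, -, -⟩, -⟩ := hjet t ht x
    exact ⟨d x, h.self_of_nhds⟩
  have hQlc : IsLocallyClosed Q := hP.isLocallyClosed.inter hneg.isLocallyClosed
  have : LocallyCompactSpace Q := hQlc.locallyCompactSpace
  have : Nonempty Q := (nonempty_iff_ne_empty.2 hne).to_subtype
  set A : ℕ → Set Q := fun n => {p | (∀ s < 0, |s - p.1.1| < 1 / ((n : ℝ) + 1) →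
      |u s p.1.2 - u p.1.1 p.1.2| ≤ n * |s - p.1.1|) ∧
    ∀ y, |y - p.1.2| < 1 / ((n : ℝ) + 1) →
      |u p.1.1 y - u p.1.1 p.1.2| ≤ n * |y - p.1.2|} with hA
  have hclosed : ∀ n, IsClosed (A n) := by
    intro n
    apply IsSeqClosed.isClosed
    intro p q hp hpq
    have hq0 : q.1.1 < 0 := q.2.2
    have hn : (0 : ℝ) < 1 / ((n : ℝ) + 1) := by positivity
    have ht : Tendsto (fun k => (p k).1.1) atTop (𝓝 q.1.1) :=
      ((continuous_fst.comp continuous_subtype_val).tendsto q).comp hpq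
    have hx : Tendsto (fun k => (p k).1.2) atTop (𝓝 q.1.2) :=
      ((continuous_snd.comp continuous_subtype_val).tendsto q).comp hpq
    have hval : Tendsto (fun k => u (p k).1.1 (p k).1.2) atTop (𝓝 (u q.1.1 q.1.2)) := by
      obtain ⟨a, ha⟩ := hcx q.1.1 hq0 q.1.2
      have h1 : Tendsto (fun k => u q.1.1 (p k).1.2) atTop (𝓝 (u q.1.1 q.1.2)) :=
        ha.continuousAt.tendsto.comp hx
      have h2 : Tendsto (fun k => (n : ℝ) * |q.1.1 - (p k).1.1|) atTop
          (𝓝 ((n : ℝ) * |q.1.1 - q.1.1|)) := ((tendsto_const_nhds.sub ht).abs).const_mul _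
      rw [sub_self, abs_zero, mul_zero] at h2
      have h3 : Tendsto (fun k => u q.1.1 (p k).1.2 - u (p k).1.1 (p k).1.2) atTop (𝓝 0) := by
        refine squeeze_zero_norm' ?_ h2
        have h4 : Tendsto (fun k => |q.1.1 - (p k).1.1|) atTop (𝓝 |q.1.1 - q.1.1|) :=
          (tendsto_const_nhds.sub ht).abs
        rw [sub_self, abs_zero] at h4
        filter_upwards [h4.eventually (gt_mem_nhds hn)] with k hk
        exact (hp k).1 q.1.1 hq0 hk
      simpa using h1.sub h3
    constructor
    · intro s hs hsq
      obtain ⟨a, ha⟩ := hcx s hs q.1.2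
      have h1 : Tendsto (fun k => u s (p k).1.2) atTop (𝓝 (u s q.1.2)) :=
        ha.continuousAt.tendsto.comp hx
      have h2 : Tendsto (fun k => |s - (p k).1.1|) atTop (𝓝 |s - q.1.1|) :=
        (tendsto_const_nhds.sub ht).abs
      refine le_of_tendsto_of_tendsto (h1.sub hval).abs (h2.const_mul (n : ℝ)) ?_
      filter_upwards [h2.eventually (gt_mem_nhds hsq)] with k hk
      exact (hp k).1 s hs hk
    · intro y hyq
      obtain ⟨a, ha⟩ := hct q.1.1 hq0 y
      have h1 : Tendsto (fun k => u (p k).1.1 y) atTop (𝓝 (u q.1.1 y)) :=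
        ha.continuousAt.tendsto.comp ht
      have h2 : Tendsto (fun k => |y - (p k).1.2|) atTop (𝓝 |y - q.1.2|) :=
        (tendsto_const_nhds.sub hx).abs
      refine le_of_tendsto_of_tendsto (h1.sub hval).abs (h2.const_mul (n : ℝ)) ?_
      filter_upwards [h2.eventually (gt_mem_nhds hyq)] with k hk
      exact (hp k).2 y hk
  have hlip : ∀ {g : ℝ → ℝ} {a x : ℝ}, HasDerivAt g a x → ∀ᶠ n : ℕ in atTop,
      ∀ y, |y - x| < 1 / ((n : ℝ) + 1) → |g y - g x| ≤ n * |y - x| := by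
    intro g a x hg
    obtain ⟨c, hc⟩ := hg.isBigO_sub.bound
    obtain ⟨r, hr, h⟩ := Metric.eventually_nhds_iff.1 hc
    filter_upwards [tendsto_natCast_atTop_atTop.eventually_ge_atTop c,
      tendsto_one_div_add_atTop_nhds_zero_nat.eventually (gt_mem_nhds hr)] with n hn hnr y hy
    refine (h (y := y) ((Real.dist_eq y x).trans_lt (hy.trans hnr))).trans ?_
    exact mul_le_mul_of_nonneg_right hn (abs_nonneg _)
  have hcover : ⋃ n, A n = univ := by
    rw [eq_univ_iff_forall]
    intro p
    obtain ⟨a, ha⟩ := hct p.1.1 p.2.2 p.1.2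
    obtain ⟨b, hb⟩ := hcx p.1.1 p.2.2 p.1.2
    obtain ⟨n, h1, h2⟩ := ((hlip ha).and (hlip hb)).exists
    exact mem_iUnion.2 ⟨n, fun s _ hs => h1 s hs, h2⟩
  obtain ⟨n, p, hp⟩ := nonempty_interior_of_iUnion_of_closed hclosed hcover
  obtain ⟨O, hO, hOA⟩ := isOpen_induced_iff.1 (isOpen_interior (s := A n))
  have hpO : p.1 ∈ O := by
    have : p ∈ Subtype.val ⁻¹' O := hOA ▸ hp
    exact this
  have hOA' : ∀ q, ∀ hq : q ∈ Q, q ∈ O → (⟨q, hq⟩ : Q) ∈ A n := fun q hq hqO =>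
    interior_subset (hOA ▸ (show (⟨q, hq⟩ : Q) ∈ Subtype.val ⁻¹' O from hqO))
  set O' : Set (ℝ × ℝ) := (O ∩ {q | q.1 < 0}) ∩ {q | F q.2 < F p.1.2 + 1} with hO'def
  have hO' : IsOpen O' := (hO.inter hneg).inter
    (isOpen_lt (hF.comp continuous_snd) continuous_const)
  refine p.2.1 ?_
  filter_upwards [hO'.mem_nhds (⟨⟨hpO, p.2.2⟩, by simp⟩ : p.1 ∈ O')] with q hq
  by_cases hqP : q ∈ P
  · obtain ⟨t, x⟩ := q
    obtain ⟨r, hr, hball⟩ := Metric.isOpen_iff.1 hO' _ hq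
    have hn : (0 : ℝ) < 1 / ((n : ℝ) + 1) := by positivity
    set ρ := min r (1 / ((n : ℝ) + 1) / 2) with hρ
    have hρ0 : 0 < ρ := by positivity
    have hρr : ρ ≤ r := min_le_left _ _
    have hρn : 2 * ρ ≤ 1 / ((n : ℝ) + 1) := by
      linarith [min_le_right r (1 / ((n : ℝ) + 1) / 2)]
    have hbox : ∀ s ∈ Ioo (t - ρ) (t + ρ), ∀ y ∈ Ioo (x - ρ) (x + ρ), (s, y) ∈ O' := by
      intro s hs y hy
      apply hball
      rw [Metric.mem_ball, Prod.dist_eq, max_lt_iff, Real.dist_eq, Real.dist_eq, abs_lt, abs_lt]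
      simp only
      refine ⟨⟨?_, ?_⟩, ?_, ?_⟩ <;> linarith [hs.1, hs.2, hy.1, hy.2]
    refine continuousAt_of_lipschitz_on_bad_set (N := n) (K := F p.1.2 + 1) (B := F p.1.2 + 1)
      hρ0 n.cast_nonneg hP hqP (fun s _ y _ h => hgood _ h) ?_ ?_ ?_ ?_
    · intro s hs y hy hsP s' hs'
      have h := hbox s hs y hy
      refine (hOA' _ ⟨hsP, h.1.2⟩ h.1.1).1 s' (hbox s' hs' y hy).1.2 ?_
      rw [abs_lt]
      constructor <;> simp only <;> linarith [hs.1, hs.2, hs'.1, hs'.2]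
    · intro s hs y hy hsP y' hy'
      have h := hbox s hs y hy
      refine (hOA' _ ⟨hsP, h.1.2⟩ h.1.1).2 y' ?_
      rw [abs_lt]
      constructor <;> simp only <;> linarith [hy.1, hy.2, hy'.1, hy'.2]
    · intro s hs y hy
      have h := hbox s hs y hy
      obtain ⟨a, e, hj, hae⟩ := hjet s h.1.2 y
      exact ⟨a, e, hj, hae.trans (le_of_lt h.2)⟩
    · intro s hs y hy
      have h := hbox s hs y hy
      exact (hB s h.1.2 y).trans (le_of_lt h.2)
  · exact hgood q hqP

/-- Maximum principle for the doubled function `Q t X - Q t Y` on `Y ≤ X`. -/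
theorem antitone_of_doubling {Q Qx Qxx Qt : ℝ → ℝ → ℝ} {s τ R : ℝ}
    (hcont : ContinuousOn (Function.uncurry Q) (Icc s τ ×ˢ Icc (-R) R))
    (hx : ∀ t ∈ Icc s τ, ∀ x, HasDerivAt (Q t) (Qx t x) x)
    (hxx : ∀ t ∈ Icc s τ, ∀ x, HasDerivAt (Qx t) (Qxx t x) x)
    (ht : ∀ t ∈ Icc s τ, ∀ x, HasDerivAt (fun r => Q r x) (Qt t x) t)
    (hstrict : ∀ t ∈ Icc s τ, ∀ Y X, Y < X → Qx t X = 0 → Qx t Y = 0 → Qxx t X ≤ 0 →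
      0 ≤ Qxx t Y → Qt t X < Qt t Y)
    (hbot : Antitone (Q s))
    (hside : ∀ t ∈ Icc s τ, ∀ Y X, Y ≤ X → R ≤ X ∨ Y ≤ -R → Q t X ≤ Q t Y) :
    ∀ t ∈ Icc s τ, Antitone (Q t) := by
  intro t₀ ht₀ Y₀ X₀ hYX₀
  set S : Set (ℝ × ℝ × ℝ) := (Icc s τ ×ˢ Icc (-R) R ×ˢ Icc (-R) R) ∩ {p | p.2.1 ≤ p.2.2} with hS
  by_cases hmem : (t₀, Y₀, X₀) ∈ S
  swap
  · apply hside t₀ ht₀ Y₀ X₀ hYX₀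
    by_contra! h
    exact hmem ⟨⟨ht₀, ⟨h.2.le, hYX₀.trans h.1.le⟩, h.2.le.trans hYX₀, h.1.le⟩, hYX₀⟩
  have hScomp : IsCompact S := (isCompact_Icc.prod (isCompact_Icc.prod isCompact_Icc)).inter_right
    (isClosed_le (by fun_prop) (by fun_prop))
  have hDcont : ContinuousOn (fun p : ℝ × ℝ × ℝ => Q p.1 p.2.2 - Q p.1 p.2.1) S := by
    refine ContinuousOn.sub ?_ ?_
    · exact hcont.comp (f := fun p : ℝ × ℝ × ℝ => (p.1, p.2.2)) (by fun_prop)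
        fun p hp => ⟨hp.1.1, hp.1.2.2⟩
    · exact hcont.comp (f := fun p : ℝ × ℝ × ℝ => (p.1, p.2.1)) (by fun_prop)
        fun p hp => ⟨hp.1.1, hp.1.2.1⟩
  obtain ⟨⟨t, Y, X⟩, ⟨⟨htI, hY, hX⟩, hYX⟩, hmax⟩ := hScomp.exists_isMaxOn ⟨_, hmem⟩ hDcont
  simp only [mem_ofPred_eq] at htI hY hX hYX
  have hmax' : ∀ t' Y' X', t' ∈ Icc s τ → Y' ∈ Icc (-R) R → X' ∈ Icc (-R) R → Y' ≤ X' →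
      Q t' X' - Q t' Y' ≤ Q t X - Q t Y := fun t' Y' X' h1 h2 h3 h4 =>
    hmax (show (t', Y', X') ∈ S from ⟨⟨h1, h2, h3⟩, h4⟩)
  rw [← sub_nonpos]
  refine (hmax hmem).trans ?_
  simp only
  by_contra! hpos
  have hlt : Y < X := lt_of_le_of_ne hYX (by rintro rfl; linarith)
  have hXR : X < R := lt_of_le_of_ne hX.2 (by
    intro h; linarith [hside t htI Y X hYX (Or.inl h.ge)])
  have hYR : -R < Y := lt_of_le_of_ne hY.1 (by
    intro h; linarith [hside t htI Y X hYX (Or.inr h.ge)])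
  have hst : s < t := lt_of_le_of_ne htI.1 (by
    rintro rfl; linarith [hbot hYX])
  have hXmax : IsLocalMax (Q t) X := by
    filter_upwards [Icc_mem_nhds hlt hXR] with z hz
    linarith [hmax' t Y z htI hY ⟨hYR.le.trans hz.1, hz.2⟩ hz.1]
  have hYmax : IsLocalMax (fun y => - Q t y) Y := by
    filter_upwards [Icc_mem_nhds hYR hlt] with z hz
    linarith [hmax' t z X htI ⟨hz.1, hz.2.trans hXR.le⟩ hX hz.2]
  obtain ⟨h1, h2⟩ := hXmax.second_deriv_nonpos (Eventually.of_forall (hx t htI)) (hxx t htI X)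
  obtain ⟨h3, h4⟩ := hYmax.second_deriv_nonpos
    (Eventually.of_forall fun y => (hx t htI y).fun_neg) (hxx t htI Y).fun_neg
  have h5 : 0 ≤ Qt t X - Qt t Y := by
    refine ((ht t htI X).fun_sub (ht t htI Y)).nonneg_of_left_max ?_
    filter_upwards [Ioo_mem_nhdsLT hst] with r hr
    exact hmax' r Y X ⟨hr.1.le, hr.2.le.trans htI.2⟩ hY hX hYX
  linarith [hstrict t htI Y X hlt h1 (by linarith) h2 (by linarith)]

/-- A function decreasing at unit rate far out eventually lies below all its earlier values. -/
lemma exists_forall_le_of_deriv_le_neg_one {m m' : ℝ → ℝ} {R₀ : ℝ} (hR₀ : 0 ≤ R₀)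
    (hm : ∀ x, HasDerivAt m (m' x) x) (hm' : ∀ x, R₀ ≤ |x| → m' x ≤ -1) :
    ∃ R, ∀ X Y, Y ≤ X → R ≤ X → m X ≤ m Y := by
  have hcont : Continuous m := continuous_iff_continuousAt.2 fun x => (hm x).continuousAt
  obtain ⟨B, hB⟩ := isCompact_Icc.exists_bound_of_continuousOn (s := Icc (-R₀) R₀)
    hcont.continuousOn
  have hright : AntitoneOn (fun x => m x + x) (Ici R₀) := by
    refine antitoneOn_of_deriv_nonpos (convex_Ici _) (by fun_prop)
      (fun x _ => ((hm x).fun_add (hasDerivAt_id x)).differentiableAt.differentiableWithinAt) ?_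
    intro x hx
    rw [interior_Ici] at hx
    have : deriv (fun x => m x + x) x = m' x + 1 := ((hm x).fun_add (hasDerivAt_id x)).deriv
    rw [this]
    linarith [hm' x ((le_of_lt hx).trans (le_abs_self x))]
  have hleft : AntitoneOn m (Iic (-R₀)) := by
    refine antitoneOn_of_deriv_nonpos (convex_Iic _) hcont.continuousOn
      (fun x _ => (hm x).differentiableAt.differentiableWithinAt) ?_
    intro x hx
    rw [interior_Iic] at hx
    rw [(hm x).deriv]
    linarith [hm' x (by linarith [neg_abs_le x, mem_Iio.1 hx])]
  have hB0 : ∀ x ∈ Icc (-R₀) R₀, -B ≤ m x ∧ m x ≤ B := fun x hx => abs_le.1 (hB x hx)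
  have hBR := hB0 R₀ ⟨by linarith, le_rfl⟩
  refine ⟨R₀ + 2 * B, fun X Y hYX hX => ?_⟩
  have hXR : R₀ ≤ X := by linarith
  rcases le_total R₀ Y with h | h
  · have := hright (mem_Ici.2 h) (mem_Ici.2 hXR) hYX
    simp only at this
    linarith
  · have h1 := hright (mem_Ici.2 le_rfl) (mem_Ici.2 hXR) hXR
    simp only at h1
    have h2 : -B ≤ m Y := by
      rcases le_total (-R₀) Y with h' | h'
      · exact (hB0 Y ⟨h', h⟩).1
      · exact (hB0 (-R₀) ⟨le_rfl, by linarith⟩).1.trans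
          (hleft (mem_Iic.2 h') (mem_Iic.2 le_rfl) h')
    linarith

/-- A primitive of `cosh ^ ν`. -/
def coshPrimitive (ν x : ℝ) : ℝ := ∫ y in (0 : ℝ)..x, Real.cosh y ^ ν

lemma coshPrimitive_hasDerivAt (ν x : ℝ) :
    HasDerivAt (coshPrimitive ν) (Real.cosh x ^ ν) x := by
  have hc : Continuous fun y => Real.cosh y ^ ν :=
    Real.continuous_cosh.rpow_const fun y => Or.inl (Real.cosh_pos y).ne'
  exact intervalIntegral.integral_hasDerivAt_right (hc.intervalIntegrable _ _)
    (hc.stronglyMeasurableAtFilter _ _) hc.continuousAt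

lemma cosh_rpow_hasDerivAt (ν x : ℝ) : HasDerivAt (fun y => Real.cosh y ^ ν)
    (ν * (Real.cosh x ^ (ν - 1) * Real.sinh x)) x := by
  refine ((Real.hasDerivAt_cosh x).rpow_const (p := ν)
    (Or.inl (Real.cosh_pos x).ne')).congr_deriv ?_
  ring

lemma coshPrimitive_strictMono (ν : ℝ) : StrictMono (coshPrimitive ν) := by
  refine strictMono_of_deriv_pos fun x => ?_
  rw [(coshPrimitive_hasDerivAt ν x).deriv]
  exact Real.rpow_pos_of_pos (Real.cosh_pos x) ν

/-- `cosh ^ (ν - 1) * sinh` increases faster than the primitive of `cosh ^ ν`. -/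
lemma cosh_rpow_mul_sinh_sub_coshPrimitive_monotone {ν : ℝ} (hν : 1 ≤ ν) :
    Monotone fun x => Real.cosh x ^ (ν - 1) * Real.sinh x - coshPrimitive ν x := by
  refine monotone_of_hasDerivAt_nonneg (fun x => ((cosh_rpow_hasDerivAt (ν - 1) x).fun_mul
    (Real.hasDerivAt_sinh x)).fun_sub (coshPrimitive_hasDerivAt ν x)) fun x => ?_
  have h1 : Real.cosh x ^ ν = Real.cosh x ^ (ν - 1) * Real.cosh x := by
    rw [← Real.rpow_add_one (Real.cosh_pos x).ne', sub_add_cancel]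
  have h2 : 0 ≤ (ν - 1) * (Real.cosh x ^ (ν - 1 - 1) * (Real.sinh x * Real.sinh x)) :=
    mul_nonneg (by linarith) (mul_nonneg (Real.rpow_nonneg (Real.cosh_pos x).le _)
      (mul_self_nonneg _))
  simp only [Pi.zero_apply]
  rw [h1]
  linarith

lemma exists_le_cosh_rpow {p : ℝ} (hp : 0 < p) (A : ℝ) :
    ∃ R ≥ 0, ∀ x, R ≤ |x| → A ≤ Real.cosh x ^ p := by
  have h1 : Tendsto Real.cosh atTop atTop := by
    refine tendsto_atTop_mono (fun x => ?_) (Real.tendsto_exp_atTop.atTop_div_const two_pos)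
    rw [Real.cosh_eq]
    linarith [Real.exp_pos (-x)]
  obtain ⟨R, hR⟩ := eventually_atTop.1
    (((tendsto_rpow_atTop hp).comp h1).eventually_ge_atTop A)
  refine ⟨max R 0, le_max_right _ _, fun x hx => ?_⟩
  have := hR |x| ((le_max_left _ _).trans hx)
  simpa only [Function.comp_apply, Real.cosh_abs] using this

/-- An ancient solution of `q_t = q_xx - 4 tanh(x) q_x` whose gradient grows slower than
`cosh ^ 4` is nonincreasing in space. -/
theorem antitone_of_ancient {q qx qxx : ℝ → ℝ → ℝ} {C l : ℝ} (hC : 0 ≤ C) (hl : 1 ≤ l)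
    (hl4 : l < 4) (hcont : ∀ t < 0, ∀ x, ContinuousAt (Function.uncurry q) (t, x))
    (hx : ∀ t < 0, ∀ x, HasDerivAt (q t) (qx t x) x)
    (hxx : ∀ t < 0, ∀ x, HasDerivAt (qx t) (qxx t x) x)
    (ht : ∀ t < 0, ∀ x, HasDerivAt (fun s => q s x) (qxx t x - 4 * Real.tanh x * qx t x) t)
    (hbd : ∀ t < 0, ∀ x, |qx t x| ≤ C * Real.cosh x ^ l) :
    ∀ t < 0, Antitone (q t) := by
  have hinit : ∀ t < 0, ∀ Y X, Y ≤ X →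
      q t X - q t Y ≤ C * (coshPrimitive l X - coshPrimitive l Y) := by
    intro t ht Y X hYX
    have hmono : Monotone fun x => C * coshPrimitive l x - q t x :=
      monotone_of_hasDerivAt_nonneg
        (fun x => ((coshPrimitive_hasDerivAt l x).const_mul C).fun_sub (hx t ht x))
        fun x => sub_nonneg.2 ((le_abs_self _).trans (hbd t ht x))
    have := hmono hYX
    simp only at this
    linarith
  have hdelta : ∀ ν Y X, Y ≤ X → 0 ≤ coshPrimitive ν X - coshPrimitive ν Y := fun ν Y X h =>
    sub_nonneg.2 ((coshPrimitive_strictMono ν).monotone h)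
  obtain ⟨μ, hlμ, hμ4⟩ := exists_between hl4
  intro τ hτ
  have key : ∀ ε > 0, ∀ s < τ, Antitone fun x => q τ x -
      C * Real.exp (-(4 - l) * (τ - s)) * coshPrimitive l x - ε * coshPrimitive μ x := by
    intro ε hε s hs
    obtain ⟨R₀, hR₀, hfar⟩ := exists_le_cosh_rpow (sub_pos.2 hlμ) ((C + 1) / ε)
    have hm : ∀ x, HasDerivAt (fun x => C * coshPrimitive l x - ε * coshPrimitive μ x)
        (C * Real.cosh x ^ l - ε * Real.cosh x ^ μ) x := fun x =>
      ((coshPrimitive_hasDerivAt l x).const_mul C).fun_sub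
        ((coshPrimitive_hasDerivAt μ x).const_mul ε)
    have hm' : ∀ x, R₀ ≤ |x| → C * Real.cosh x ^ l - ε * Real.cosh x ^ μ ≤ -1 := by
      intro x hxR
      have h1 : Real.cosh x ^ μ = Real.cosh x ^ l * Real.cosh x ^ (μ - l) := by
        rw [← Real.rpow_add (Real.cosh_pos x), add_sub_cancel]
      have h2 := hfar x hxR
      rw [div_le_iff₀ hε] at h2
      have h3 : 1 ≤ Real.cosh x ^ l := Real.one_le_rpow (Real.one_le_cosh x) (by linarith)
      rw [h1]
      nlinarith
    obtain ⟨R₁, hR₁⟩ := exists_forall_le_of_deriv_le_neg_one hR₀ hm hm'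
    obtain ⟨R₂, hR₂⟩ := exists_forall_le_of_deriv_le_neg_one hR₀
      (m := fun x => -(C * coshPrimitive l (-x) - ε * coshPrimitive μ (-x)))
      (m' := fun x => C * Real.cosh (-x) ^ l - ε * Real.cosh (-x) ^ μ)
      (fun x => by simpa [Function.comp_def] using ((hm (-x)).scomp x (hasDerivAt_neg x)).fun_neg)
      (fun x hx => hm' (-x) (by rwa [abs_neg]))
    have hneg : ∀ t ∈ Icc s τ, t < 0 := fun t ht => ht.2.trans_lt hτ
    have hE : ∀ t, HasDerivAt (fun r => C * Real.exp (-(4 - l) * (r - s)))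
        (-(4 - l) * (C * Real.exp (-(4 - l) * (t - s)))) t := by
      intro t
      have := ((((hasDerivAt_id t).sub_const s).const_mul (-(4 - l))).exp).const_mul C
      refine this.congr_deriv ?_
      simp
      ring
    have hE0 : ∀ t, 0 ≤ C * Real.exp (-(4 - l) * (t - s)) := fun t =>
      mul_nonneg hC (Real.exp_pos _).le
    have hg : ∀ ν x : ℝ, 4 * Real.tanh x * Real.cosh x ^ ν =
        4 * (Real.cosh x ^ (ν - 1) * Real.sinh x) := by
      intro ν x
      rw [Real.tanh_eq_sinh_div_cosh, Real.rpow_sub_one (Real.cosh_pos x).ne']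
      ring
    refine antitone_of_doubling (R := max R₁ R₂) (s := s) (τ := τ)
      (Q := fun t x => q t x - C * Real.exp (-(4 - l) * (t - s)) * coshPrimitive l x
        - ε * coshPrimitive μ x)
      (Qx := fun t x => qx t x - C * Real.exp (-(4 - l) * (t - s)) * Real.cosh x ^ l
        - ε * Real.cosh x ^ μ)
      (Qxx := fun t x => qxx t x - C * Real.exp (-(4 - l) * (t - s)) *
        (l * (Real.cosh x ^ (l - 1) * Real.sinh x))
        - ε * (μ * (Real.cosh x ^ (μ - 1) * Real.sinh x)))
      (Qt := fun t x => qxx t x - 4 * Real.tanh x * qx t x -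
        -(4 - l) * (C * Real.exp (-(4 - l) * (t - s))) * coshPrimitive l x)
      ?_ ?_ ?_ ?_ ?_ ?_ ?_ τ ⟨hs.le, le_rfl⟩
    · rintro ⟨t, x⟩ ⟨ht', -⟩
      apply ContinuousAt.continuousWithinAt
      have hc1 : Continuous fun p : ℝ × ℝ =>
          C * Real.exp (-(4 - l) * (p.1 - s)) * coshPrimitive l p.2 :=
        (by fun_prop : Continuous fun p : ℝ × ℝ => C * Real.exp (-(4 - l) * (p.1 - s))).mul
          ((continuous_iff_continuousAt.2 fun y =>
            (coshPrimitive_hasDerivAt l y).continuousAt).comp continuous_snd)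
      have hc2 : Continuous fun p : ℝ × ℝ => ε * coshPrimitive μ p.2 :=
        continuous_const.mul ((continuous_iff_continuousAt.2 fun y =>
            (coshPrimitive_hasDerivAt μ y).continuousAt).comp continuous_snd)
      exact ((hcont t (hneg t ht') x).sub hc1.continuousAt).sub hc2.continuousAt
    · intro t ht' x
      exact ((hx t (hneg t ht') x).fun_sub ((coshPrimitive_hasDerivAt l x).const_mul _)).fun_sub
        ((coshPrimitive_hasDerivAt μ x).const_mul ε)
    · intro t ht' x
      exact ((hxx t (hneg t ht') x).fun_sub ((cosh_rpow_hasDerivAt l x).const_mul _)).fun_sub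
        ((cosh_rpow_hasDerivAt μ x).const_mul ε)
    · intro t ht' x
      exact ((ht t (hneg t ht') x).fun_sub ((hE t).mul_const _)).sub_const _
    · intro t ht' Y X hYX hX1 hY1 hX2 hY2
      set k := C * Real.exp (-(4 - l) * (t - s)) with hk
      have hXx : 4 * Real.tanh X * qx t X = k * (4 * (Real.cosh X ^ (l - 1) * Real.sinh X))
          + ε * (4 * (Real.cosh X ^ (μ - 1) * Real.sinh X)) := by
        rw [← hg, ← hg, show qx t X = k * Real.cosh X ^ l + ε * Real.cosh X ^ μ by linarith]
        ring
      have hYx : 4 * Real.tanh Y * qx t Y = k * (4 * (Real.cosh Y ^ (l - 1) * Real.sinh Y))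
          + ε * (4 * (Real.cosh Y ^ (μ - 1) * Real.sinh Y)) := by
        rw [← hg, ← hg, show qx t Y = k * Real.cosh Y ^ l + ε * Real.cosh Y ^ μ by linarith]
        ring
      have h1 := cosh_rpow_mul_sinh_sub_coshPrimitive_monotone hl hYX.le
      have h2 := cosh_rpow_mul_sinh_sub_coshPrimitive_monotone (hl.trans hlμ.le) hYX.le
      have h3 := coshPrimitive_strictMono μ hYX
      simp only at h1 h2
      have h4 := mul_nonneg (mul_nonneg (hE0 t) (by linarith : 0 ≤ 4 - l)) (sub_nonneg.2 h1)
      have h5 : 0 < ε * (4 - μ) * (Real.cosh X ^ (μ - 1) * Real.sinh X -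
          Real.cosh Y ^ (μ - 1) * Real.sinh Y) :=
        mul_pos (mul_pos hε (by linarith)) (by linarith)
      rw [← hk] at h4
      rw [hXx, hYx]
      linarith
    · intro Y X hYX
      have := hinit s (hs.trans hτ) Y X hYX
      have h2 := mul_nonneg hε.le (hdelta μ Y X hYX)
      simp only [sub_self, mul_zero, Real.exp_zero, mul_one]
      linarith
    · intro t ht' Y X hYX hor
      have h1 := hinit t (hneg t ht') Y X hYX
      have h2 : 0 ≤ C * Real.exp (-(4 - l) * (t - s)) *
        (coshPrimitive l X - coshPrimitive l Y) := mul_nonneg (hE0 t) (hdelta l Y X hYX)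
      have h3 : C * coshPrimitive l X - ε * coshPrimitive μ X ≤
          C * coshPrimitive l Y - ε * coshPrimitive μ Y := by
        rcases hor with h | h
        · exact hR₁ X Y hYX ((le_max_left _ _).trans h)
        · have := hR₂ (-Y) (-X) (neg_le_neg hYX) (by linarith [le_max_right R₁ R₂])
          simp only [neg_neg] at this
          linarith
      linarith
  intro Y X hYX
  have hlim1 : Tendsto (fun s => Real.exp (-(4 - l) * (τ - s))) atBot (𝓝 0) := by
    refine Real.tendsto_exp_atBot.comp ?_
    have h1 : Tendsto (fun s : ℝ => τ - s) atBot atTop :=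
      tendsto_atTop_add_const_left _ τ tendsto_neg_atBot_atTop
    exact h1.const_mul_atTop_of_neg (by linarith)
  have hε : ∀ ε > 0, q τ X - ε * coshPrimitive μ X ≤ q τ Y - ε * coshPrimitive μ Y := by
    intro ε hε
    have hlim : ∀ x, Tendsto (fun s => q τ x -
        C * Real.exp (-(4 - l) * (τ - s)) * coshPrimitive l x - ε * coshPrimitive μ x) atBot
        (𝓝 (q τ x - C * 0 * coshPrimitive l x - ε * coshPrimitive μ x)) := fun x =>
      (tendsto_const_nhds.sub ((hlim1.const_mul C).mul_const _)).sub_const _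
    have := le_of_tendsto_of_tendsto (hlim X) (hlim Y) (by
      filter_upwards [Iio_mem_atBot τ] with s hs using key ε hε s hs hYX)
    linarith
  have hlim : ∀ x, Tendsto (fun ε => q τ x - ε * coshPrimitive μ x) (𝓝[>] 0)
      (𝓝 (q τ x - 0 * coshPrimitive μ x)) := fun x =>
    ((by fun_prop : Continuous fun ε => q τ x - ε * coshPrimitive μ x).tendsto 0).mono_left
      nhdsWithin_le_nhds
  have := le_of_tendsto_of_tendsto (hlim X) (hlim Y) (by
    filter_upwards [self_mem_nhdsWithin] with ε h using hε ε h)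
  simpa using this

/-- Gradient bound for ancient solutions of exponential growth. -/
lemma exists_deriv_bound {v : ℝ → ℝ → ℝ} {C k : ℝ} (hC : 0 < C) (hk : 0 ≤ k)
    (hcont : ∀ t < 0, ∀ x, ContinuousAt (Function.uncurry v) (t, x))
    (hjet : ∀ t < 0, ∀ x, ∃ a e, HeatJet v t x a e ∧ |a - e| ≤ 4 * |v t x|)
    (hbd : ∀ t < 0, ∀ x, |v t x| ≤ C * Real.exp (k * |x|)) :
    ∃ C' ≥ 0, ∀ t < 0, ∀ x, |deriv (v t) x| ≤ C' * Real.exp (k * |x|) := by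
  refine ⟨6 * (C * Real.exp k), by positivity, fun t ht x => ?_⟩
  set B := C * Real.exp k * Real.exp (k * |x|) with hB
  have hB0 : 0 < B := by positivity
  have hvB : ∀ s < 0, ∀ y ∈ Icc (x - 1) (x + 1), |v s y| ≤ B := by
    intro s hs y hy
    refine (hbd s hs y).trans ?_
    rw [hB, mul_assoc, ← Real.exp_add]
    have h1 : |y| ≤ 1 + |x| := by
      have h2 : |y - x| ≤ 1 := by rw [abs_le]; constructor <;> linarith [hy.1, hy.2]
      have := abs_add_le (y - x) x
      rw [sub_add_cancel] at this
      linarith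
    gcongr
    nlinarith
  have hneg : ∀ s ∈ Icc (t - 1) t, s < 0 := fun s hs => hs.2.trans_lt ht
  have hR := reflection_bound (u := v) (s := t - 1) (τ := t) (c := x) (r := 1) (K := 4 * B)
    (B := B) (M := 6 * B) (by linarith) one_pos
    (by
      rintro ⟨s, y⟩ ⟨hs, -⟩
      exact (hcont s (hneg s hs) y).continuousWithinAt)
    (fun s hs y hy => by
      have hs0 := hneg s ⟨hs.1.le, hs.2⟩
      obtain ⟨a, e, hj, hae⟩ := hjet s hs0 y
      exact ⟨a, e, hj, by linarith [hvB s hs0 y ⟨hy.1.le, hy.2.le⟩]⟩)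
    (fun s hs y hy => hvB s (hneg s hs) y hy)
    (by linarith) (by linarith)
  obtain ⟨d, hd⟩ : ∃ d, HasDerivAt (v t) d x := by
    obtain ⟨a, e, ⟨d, h, -, -⟩, -⟩ := hjet t ht x
    exact ⟨d x, h.self_of_nhds⟩
  have hsym : HasDerivAt (fun h => v t (x + h) - v t (x - h)) (d - -d) 0 := by
    refine HasDerivAt.fun_sub ?_ ?_
    · exact HasDerivAt.comp_const_add x 0 (by simpa using hd)
    · exact HasDerivAt.comp_const_sub x 0 (by simpa using hd)
  have hlip : ‖d - -d‖ ≤ 12 * B := by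
    refine hsym.le_of_lip' (by positivity) ?_
    filter_upwards [Icc_mem_nhds (show (-1 : ℝ) < 0 by norm_num) one_pos] with h hh
    have h1 : |h| ∈ Icc (0 : ℝ) 1 := ⟨abs_nonneg h, abs_le.2 hh⟩
    have h2 := hR |h| h1
    have h3 : |v t (x + |h|) - v t (x - |h|)| = |v t (x + h) - v t (x - h)| := by
      rcases abs_cases h with ⟨h', -⟩ | ⟨h', -⟩ <;> rw [h']
      rw [sub_neg_eq_add, ← sub_eq_add_neg, abs_sub_comm]
    rw [h3, sub_sub_cancel, one_mul] at h2
    simp only [Real.norm_eq_abs, add_zero, sub_zero, sub_self]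
    refine h2.trans ?_
    have := mul_nonneg hB0.le h1.1
    nlinarith [h1.1]
  rw [hd.deriv]
  rw [Real.norm_eq_abs, show d - -d = 2 * d by ring, abs_mul, abs_two] at hlip
  rw [mul_assoc 6]
  linarith

/-- Ancient solutions of `v_t = v_xx + (2 - 6 tanh²(x)) v` of growth less than `exp (2|x|)` are
multiples of `1 / cosh²` at each time. -/
theorem mul_cosh_sq_eq_of_ancient {v : ℝ → ℝ → ℝ} {C k : ℝ} (hC : 0 < C) (hk : 0 ≤ k)
    (hk2 : k < 2)
    (hreg : ∀ t < 0, ∀ x, DifferentiableAt ℝ (v t) x ∧ DifferentiableAt ℝ (deriv (v t)) x)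
    (hpde : ∀ t < 0, ∀ x, HasDerivAt (fun s => v s x)
      (deriv (deriv (v t)) x + (2 - 6 * Real.tanh x ^ 2) * v t x) t)
    (hbd : ∀ t < 0, ∀ x, |v t x| ≤ C * Real.exp (k * |x|)) :
    ∀ t < 0, ∀ x, v t x * Real.cosh x ^ 2 = v t 0 := by
  have hjet : ∀ t < 0, ∀ x, ∃ a e, HeatJet v t x a e ∧ |a - e| ≤ 4 * |v t x| := by
    intro t ht x
    refine ⟨_, _, ⟨deriv (v t), Eventually.of_forall fun y => (hreg t ht y).1.hasDerivAt,
      (hreg t ht x).2.hasDerivAt, hpde t ht x⟩, ?_⟩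
    rw [add_sub_cancel_left, abs_mul]
    refine mul_le_mul_of_nonneg_right ?_ (abs_nonneg _)
    have h1 := abs_le.1 (Real.abs_tanh_lt_one x).le
    rw [abs_le]
    constructor <;> nlinarith
  have hcont : ∀ t < 0, ∀ x, ContinuousAt (Function.uncurry v) (t, x) := by
    refine continuousAt_of_heatJet (F := fun x => 4 * (C * Real.exp (k * |x|))) (by fun_prop) ?_ ?_
    · intro t ht x
      obtain ⟨a, e, hj, hae⟩ := hjet t ht x
      exact ⟨a, e, hj, by linarith [hbd t ht x]⟩
    · intro t ht x
      linarith [hbd t ht x, abs_nonneg (v t x)]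
  obtain ⟨C', hC', hgrad⟩ := exists_deriv_bound hC hk hcont hjet hbd
  set qx : ℝ → ℝ → ℝ := fun t x =>
    deriv (v t) x * Real.cosh x ^ 2 + v t x * (2 * Real.cosh x * Real.sinh x) with hqx
  set qxx : ℝ → ℝ → ℝ := fun t x => deriv (deriv (v t)) x * Real.cosh x ^ 2 +
    deriv (v t) x * (2 * Real.cosh x * Real.sinh x) +
    (deriv (v t) x * (2 * Real.cosh x * Real.sinh x) +
      v t x * (2 * Real.sinh x * Real.sinh x + 2 * Real.cosh x * Real.cosh x)) with hqxx
  have hsq : ∀ x, HasDerivAt (fun y => Real.cosh y ^ 2) (2 * Real.cosh x * Real.sinh x) x :=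
    fun x => by simpa using (Real.hasDerivAt_cosh x).fun_pow 2
  have hx : ∀ t < 0, ∀ x, HasDerivAt (fun y => v t y * Real.cosh y ^ 2) (qx t x) x :=
    fun t ht x => (hreg t ht x).1.hasDerivAt.fun_mul (hsq x)
  have hxx : ∀ t < 0, ∀ x, HasDerivAt (qx t) (qxx t x) x := fun t ht x =>
    ((hreg t ht x).2.hasDerivAt.fun_mul (hsq x)).fun_add ((hreg t ht x).1.hasDerivAt.fun_mul
      (((Real.hasDerivAt_cosh x).const_mul 2).fun_mul (Real.hasDerivAt_sinh x)))
  have ht : ∀ t < 0, ∀ x, HasDerivAt (fun s => v s x * Real.cosh x ^ 2)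
      (qxx t x - 4 * Real.tanh x * qx t x) t := by
    intro t ht x
    refine ((hpde t ht x).mul_const (Real.cosh x ^ 2)).congr_deriv ?_
    have := (Real.cosh_pos x).ne'
    rw [hqx, hqxx, Real.tanh_eq_sinh_div_cosh]
    field_simp
    ring
  have hbound : ∀ t < 0, ∀ x, |qx t x| ≤ (C' + 2 * C) * 2 ^ k * Real.cosh x ^ (k + 2) := by
    intro t ht x
    have hc := Real.cosh_pos x
    have h1 : Real.exp (k * |x|) ≤ 2 ^ k * Real.cosh x ^ k := by
      rw [← Real.mul_rpow two_pos.le hc.le, mul_comm, Real.exp_mul]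
      refine Real.rpow_le_rpow (Real.exp_pos _).le ?_ hk
      rw [← Real.cosh_abs, Real.cosh_eq]
      linarith [Real.exp_pos (-|x|)]
    have h2 : |Real.sinh x| ≤ Real.cosh x := by
      refine abs_le_of_sq_le_sq ?_ hc.le
      rw [Real.cosh_sq]; linarith
    have h3 : |deriv (v t) x * Real.cosh x ^ 2| ≤
        C' * Real.exp (k * |x|) * Real.cosh x ^ 2 := by
      rw [abs_mul, abs_of_pos (pow_pos hc 2)]
      exact mul_le_mul_of_nonneg_right (hgrad t ht x) (by positivity)
    have h4 : |v t x * (2 * Real.cosh x * Real.sinh x)| ≤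
        C * Real.exp (k * |x|) * (2 * Real.cosh x * Real.cosh x) := by
      rw [abs_mul, abs_mul (2 * Real.cosh x), abs_of_pos (by positivity : 0 < 2 * Real.cosh x)]
      gcongr
      exact hbd t ht x
    have h5 : Real.cosh x ^ (k + 2) = Real.cosh x ^ k * Real.cosh x ^ 2 := by
      rw [Real.rpow_add hc, Real.rpow_two]
    calc |qx t x| ≤ (C' + 2 * C) * Real.exp (k * |x|) * Real.cosh x ^ 2 := by
          refine (abs_add_le _ _).trans ((add_le_add h3 h4).trans_eq ?_)
          ring
      _ ≤ (C' + 2 * C) * (2 ^ k * Real.cosh x ^ k) * Real.cosh x ^ 2 := by gcongr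
      _ = (C' + 2 * C) * 2 ^ k * Real.cosh x ^ (k + 2) := by rw [h5]; ring
  have hqcont : ∀ t < 0, ∀ x,
      ContinuousAt (Function.uncurry fun t x => v t x * Real.cosh x ^ 2) (t, x) := fun t ht x =>
    (hcont t ht x).mul
      (by fun_prop : Continuous fun p : ℝ × ℝ => Real.cosh p.2 ^ 2).continuousAt
  have hanti := antitone_of_ancient (by positivity) (by linarith) (by linarith) hqcont hx hxx ht
    hbound
  have hanti' := antitone_of_ancient (C := (C' + 2 * C) * 2 ^ k) (l := k + 2)
    (q := fun t x => -(v t x * Real.cosh x ^ 2)) (qx := fun t x => - qx t x)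
    (qxx := fun t x => - qxx t x) (by positivity) (by linarith) (by linarith)
    (fun t ht x => (hqcont t ht x).neg) (fun t ht x => (hx t ht x).fun_neg)
    (fun t ht x => (hxx t ht x).fun_neg)
    (fun t h x => ((ht t h x).fun_neg).congr_deriv (by ring))
    (fun t ht x => by rw [abs_neg]; exact hbound t ht x)
  intro t ht x
  have h0 : v t 0 * Real.cosh 0 ^ 2 = v t 0 := by simp
  rw [← h0]
  rcases le_total x 0 with h | h
  · have h1 := hanti t ht h
    have h2 := hanti' t ht h
    simp only at h1 h2
    linarith
  · have h1 := hanti t ht h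
    have h2 := hanti' t ht h
    simp only at h1 h2
    linarith

lemma w_hasDerivAt (s : ℝ) :
    HasDerivAt w ((Real.cosh (s / Real.sqrt 2) ^ 2)⁻¹ / Real.sqrt 2) s := by
  have hw : w = fun s => Real.sinh (s / Real.sqrt 2) / Real.cosh (s / Real.sqrt 2) := by
    funext s
    rw [w, Real.tanh_eq_sinh_div_cosh]
  rw [hw]
  have h := (hasDerivAt_id s).div_const (Real.sqrt 2)
  have hc := (Real.cosh_pos (s / Real.sqrt 2)).ne'
  refine (h.sinh.fun_div h.cosh hc).congr_deriv ?_
  have h1 := Real.cosh_sq_sub_sinh_sq (s / Real.sqrt 2)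
  simp only [id]
  field_simp
  linear_combination h1

lemma w1_eq (s : ℝ) : w1 s = (Real.cosh (s / Real.sqrt 2) ^ 2)⁻¹ / Real.sqrt 2 :=
  (w_hasDerivAt s).deriv

lemma f1_eq (v : ℝ) : f1 v = 1 - 3 * v ^ 2 := by
  have h : HasDerivAt f (1 * (1 - v ^ 2) + v * (-(2 * v))) v := by
    have h := (hasDerivAt_id v).fun_mul ((hasDerivAt_pow 2 v).const_sub 1)
    refine h.congr_deriv ?_
    simp
  rw [f1, h.deriv]
  ring

lemma integral_inv_cosh_pow_four_pos : 0 < ∫ x : ℝ, (Real.cosh x ^ 4)⁻¹ := by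
  have hpos : ∀ x : ℝ, 0 < (Real.cosh x ^ 4)⁻¹ := fun x => by
    have := Real.cosh_pos x
    positivity
  have hcont : Continuous fun x : ℝ => (Real.cosh x ^ 4)⁻¹ :=
    (by fun_prop : Continuous fun x : ℝ => Real.cosh x ^ 4).inv₀ fun x =>
      (pow_pos (Real.cosh_pos x) 4).ne'
  have hint : Integrable fun x : ℝ => (Real.cosh x ^ 4)⁻¹ := by
    refine integrable_inv_one_add_sq.mono' hcont.aestronglyMeasurable (Eventually.of_forall ?_)
    intro x
    rw [Real.norm_of_nonneg (hpos x).le]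
    refine inv_anti₀ (by positivity) ?_
    have h1 : x ^ 2 ≤ Real.sinh x ^ 2 := by
      rcases le_total 0 x with h | h
      · exact pow_le_pow_left₀ h (Real.self_le_sinh_iff.2 h) 2
      · rw [← neg_sq x, ← neg_sq (Real.sinh x)]
        exact pow_le_pow_left₀ (by linarith) (by linarith [Real.sinh_le_self_iff.2 h]) 2
    nlinarith [Real.cosh_sq x, sq_nonneg (Real.sinh x)]
  have hsupp : (Function.support fun x : ℝ => (Real.cosh x ^ 4)⁻¹) = univ :=
    eq_univ_of_forall fun x => (hpos x).ne'
  rw [integral_pos_iff_support_of_nonneg (fun x => (hpos x).le) hint, hsupp]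
  simp

/-- An ancient solution of `φ_t = φ_xx + f'(w(x+x₀))φ` with subcritical exponential growth
which is orthogonal to `w'(·+x₀)` for all times vanishes identically. -/
theorem stmt_13 (x₀ σ : ℝ) (hσ : σ ∈ Set.Ioo 0 (Real.sqrt 2)) (φ : ℝ → ℝ → ℝ)
    (hreg : ∀ t ≤ (0 : ℝ), ∀ x : ℝ,
      DifferentiableAt ℝ (φ t) x ∧ DifferentiableAt ℝ (deriv (φ t)) x)
    (hpde : ∀ t ≤ (0 : ℝ), ∀ x : ℝ,
      HasDerivAt (fun s => φ s x) (deriv (deriv (φ t)) x + f1 (w (x + x₀)) * φ t x) t)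
    (C : ℝ) (hC : 0 < C)
    (hbd : ∀ t ≤ (0 : ℝ), ∀ x : ℝ, |φ t x| ≤ C * Real.exp (σ * |x|))
    (hort : ∀ t ≤ (0 : ℝ), (∫ x : ℝ, φ t x * w1 (x + x₀)) = 0) :
    ∀ t ≤ (0 : ℝ), ∀ x : ℝ, φ t x = 0 := by
  have hs0 : 0 < Real.sqrt 2 := by positivity
  have hss : Real.sqrt 2 * Real.sqrt 2 = 2 := Real.mul_self_sqrt two_pos.le
  have haff : ∀ X, HasDerivAt (fun Y => Real.sqrt 2 * Y - x₀) (Real.sqrt 2) X := fun X => by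
    simpa using ((hasDerivAt_id X).const_mul (Real.sqrt 2)).sub_const x₀
  set v : ℝ → ℝ → ℝ := fun τ X => φ (2 * τ) (Real.sqrt 2 * X - x₀) with hv
  have hv1 : ∀ τ < 0, ∀ X, HasDerivAt (v τ)
      (deriv (φ (2 * τ)) (Real.sqrt 2 * X - x₀) * Real.sqrt 2) X := fun τ hτ X =>
    (hreg (2 * τ) (by linarith) _).1.hasDerivAt.comp X (haff X)
  have hv1' : ∀ τ < 0, deriv (v τ) =
      fun X => deriv (φ (2 * τ)) (Real.sqrt 2 * X - x₀) * Real.sqrt 2 := fun τ hτ =>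
    funext fun X => (hv1 τ hτ X).deriv
  have hv2 : ∀ τ < 0, ∀ X, HasDerivAt (deriv (v τ))
      (2 * deriv (deriv (φ (2 * τ))) (Real.sqrt 2 * X - x₀)) X := by
    intro τ hτ X
    rw [hv1' τ hτ]
    refine (((hreg (2 * τ) (by linarith) _).2.hasDerivAt.comp X (haff X)).mul_const
      (Real.sqrt 2)).congr_deriv ?_
    rw [mul_assoc, hss, mul_comm]
  have hmain : ∀ τ < 0, ∀ X, v τ X * Real.cosh X ^ 2 = v τ 0 := by
    refine mul_cosh_sq_eq_of_ancient (C := C * Real.exp (σ * |x₀|)) (k := σ * Real.sqrt 2)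
      (by positivity) (mul_nonneg hσ.1.le hs0.le) ?_
      (fun τ hτ X => ⟨(hv1 τ hτ X).differentiableAt, (hv2 τ hτ X).differentiableAt⟩) ?_ ?_
    · nlinarith [hσ.2]
    · intro τ hτ X
      have h2 : HasDerivAt (fun s : ℝ => 2 * s) 2 τ := by
        simpa using (hasDerivAt_id τ).const_mul 2
      refine ((hpde (2 * τ) (by linarith) (Real.sqrt 2 * X - x₀)).comp τ h2).congr_deriv ?_
      rw [(hv2 τ hτ X).deriv, f1_eq, w, sub_add_cancel, mul_div_cancel_left₀ _ hs0.ne']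
      ring
    · intro τ hτ X
      refine (hbd (2 * τ) (by linarith) _).trans ?_
      rw [mul_assoc, ← Real.exp_add]
      have h1 := abs_sub (Real.sqrt 2 * X) x₀
      rw [abs_mul, abs_of_pos hs0] at h1
      have h2 := mul_le_mul_of_nonneg_left h1 hσ.1.le
      gcongr
      linarith
  have hneg : ∀ t < (0 : ℝ), ∀ x, φ t x = 0 := by
    intro t ht x
    have hform : ∀ y, φ t y =
        v (t / 2) 0 * (Real.cosh ((y + x₀) / Real.sqrt 2) ^ 2)⁻¹ := by
      intro y
      have h := hmain (t / 2) (by linarith) ((y + x₀) / Real.sqrt 2)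
      rw [eq_mul_inv_iff_mul_eq₀ (pow_pos (Real.cosh_pos _) 2).ne', ← h]
      simp only [hv]
      rw [mul_div_cancel₀ _ hs0.ne', mul_div_cancel₀ _ two_ne_zero, add_sub_cancel_right]
    have hI : (∫ y : ℝ, φ t y * w1 (y + x₀)) =
        v (t / 2) 0 / Real.sqrt 2 * (Real.sqrt 2 * ∫ y : ℝ, (Real.cosh y ^ 4)⁻¹) := by
      have h1 : ∀ y, φ t y * w1 (y + x₀) = v (t / 2) 0 / Real.sqrt 2 *
          (fun z => (Real.cosh (z / Real.sqrt 2) ^ 4)⁻¹) (y + x₀) := by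
        intro y
        rw [hform, w1_eq]
        have := (Real.cosh_pos ((y + x₀) / Real.sqrt 2)).ne'
        field_simp
      simp_rw [h1]
      rw [integral_const_mul, integral_add_right_eq_self
        (fun z => (Real.cosh (z / Real.sqrt 2) ^ 4)⁻¹) x₀,
        Measure.integral_comp_div (fun z => (Real.cosh z ^ 4)⁻¹) (Real.sqrt 2),
        abs_of_pos hs0, smul_eq_mul]
    have ha : v (t / 2) 0 = 0 := by
      have h := hort t ht.le
      rw [hI, ← mul_assoc, div_mul_cancel₀ _ hs0.ne'] at h
      exact (mul_eq_zero.1 h).resolve_right integral_inv_cosh_pow_four_pos.ne'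
    rw [hform, ha, zero_mul]
  intro t ht x
  rcases ht.lt_or_eq with h | rfl
  · exact hneg t h x
  · have h1 : Tendsto (fun s => φ s x) (𝓝[<] 0) (𝓝 (φ 0 x)) :=
      (hpde 0 le_rfl x).continuousAt.tendsto.mono_left nhdsWithin_le_nhds
    have h2 : Tendsto (fun s => φ s x) (𝓝[<] 0) (𝓝 0) :=
      tendsto_const_nhds.congr' (by
        filter_upwards [self_mem_nhdsWithin] with s hs using (hneg s hs x).symm)
    exact tendsto_nhds_unique h1 h2

end
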